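/- arXiv:1804.11016 — 2 statements merged into one kernel-verified Lean document; each statement's English description precedes it below -/
import Mathlib

section
/- Let C' < C and let f₃ ∈ F_(C',β) be such that for each x the map y ↦ f₃(x,y) is C² on [0,1] (so that f₃ and its inverse in the second variable are Lipschitz in y with some constant L₃, and ∂f₃/∂x is Lipschitz in y with some constant K₃). Then for every ξ > 0, every integer m ≥ 1, and every closed interval I = [b₁,b₂] ⊂ [0,1] with rational endpoints and 0 < b₁ ≤ b₂ < 1, there exist n ∈ ℕ and a function f̃ ∈ F_(C,β) such that d_α(f̃, f₃) < ξ/3 and f̃ ∈ A_{n,m,I} (in particular f̃ ∈ B_{m,I}). -/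
open MeasureTheory Set Filter Topology
open scoped ENNReal

noncomputable section

/-- The unit square `M = [0,1]²`. -/
def MSq : Set (ℝ × ℝ) := unitInterval ×ˢ unitInterval

/-- Lower `(C,γ)`-bi-Hölder bound in the second variable. -/
def BiHolderLower (C γ : ℝ) (f : ℝ → ℝ → ℝ) : Prop :=
  ∀ x ∈ unitInterval, ∀ y₁ ∈ unitInterval, ∀ y₂ ∈ unitInterval, y₁ ≠ y₂ →
    C⁻¹ * |y₂ - y₁| ^ (1 / γ) ≤ |f x y₂ - f x y₁|

/-- Upper `(C,γ)`-Hölder bound in the second variable. -/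
def BiHolderUpper (C γ : ℝ) (f : ℝ → ℝ → ℝ) : Prop :=
  ∀ x ∈ unitInterval, ∀ y₁ ∈ unitInterval, ∀ y₂ ∈ unitInterval, y₁ ≠ y₂ →
    |f x y₂ - f x y₁| ≤ C * |y₂ - y₁| ^ γ

/-- Membership in the space `F_(C,γ)`: conditions (i)–(iv); `fx` plays the role of `∂f/∂x`. -/
structure IsFol (C γ : ℝ) (f fx : ℝ → ℝ → ℝ) : Prop where
  mapsTo : ∀ x ∈ unitInterval, ∀ y ∈ unitInterval, f x y ∈ unitInterval
  hasDeriv : ∀ y ∈ unitInterval, ∀ x ∈ unitInterval,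
    HasDerivWithinAt (fun x' => f x' y) (fx x y) unitInterval x
  derivCont : ContinuousOn (fun p : ℝ × ℝ => fx p.1 p.2) MSq
  eq_id : ∀ y ∈ unitInterval, f 0 y = y
  eq_bot : ∀ x ∈ unitInterval, f x 0 = 0
  eq_top : ∀ x ∈ unitInterval, f x 1 = 1
  lower : BiHolderLower C γ f
  upper : BiHolderUpper C γ f

/-- The space `F_(C,γ)`. -/
structure Fol (C γ : ℝ) where
  f : ℝ → ℝ → ℝ
  fx : ℝ → ℝ → ℝ
  isFol : IsFol C γ f fx

/-- The inverse of `y ↦ f x y` on `[0,1]`, i.e. the holonomy `h^f_{x,0}`. -/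
def hinv (f : ℝ → ℝ → ℝ) (x : ℝ) : ℝ → ℝ := Function.invFunOn (f x) unitInterval

/-- The `C⁰` distance over the square. -/
def C0dist (u v : ℝ → ℝ → ℝ) : ℝ :=
  sSup {r | ∃ x ∈ unitInterval, ∃ y ∈ unitInterval, r = |u x y - v x y|}

/-- The `α`-Hölder seminorm of the difference `h - k` on `[0,1]`. -/
def holDist (α : ℝ) (h k : ℝ → ℝ) : ℝ :=
  sSup {r | ∃ y₁ ∈ unitInterval, ∃ y₂ ∈ unitInterval, y₁ ≠ y₂ ∧
    r = |(h y₂ - k y₂) - (h y₁ - k y₁)| / |y₂ - y₁| ^ α}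

/-- The distance `d_α`, on raw data `(f, ∂f/∂x)`, `(g, ∂g/∂x)`. -/
def dalpha (α : ℝ) (f fx g gx : ℝ → ℝ → ℝ) : ℝ :=
  C0dist f g + C0dist fx gx +
    sSup {r | ∃ x ∈ unitInterval,
      r = max (holDist α (f x) (g x)) (holDist α (hinv f x) (hinv g x))}

/-- The distance `d_α` on `F_(C,γ)`. -/
def dalphaF {C γ : ℝ} (α : ℝ) (F G : Fol C γ) : ℝ := dalpha α F.f F.fx G.f G.fx

/-- Openness with respect to a distance function. -/
def IsOpenWrt {X : Type*} (d : X → X → ℝ) (s : Set X) : Prop :=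
  ∀ f ∈ s, ∃ ε > 0, ∀ g, d g f < ε → g ∈ s

/-- Density with respect to a distance function. -/
def IsDenseWrt {X : Type*} (d : X → X → ℝ) (s : Set X) : Prop :=
  ∀ f : X, ∀ ε > 0, ∃ g ∈ s, d g f < ε

/-- Lebesgue measure `μ` on the unit square `M`. -/
def muM : Measure (ℝ × ℝ) := volume.restrict MSq

/-- The projection `π_f(x,z) = f(x,·)⁻¹(z)` along the leaves. -/
def projF (f : ℝ → ℝ → ℝ) : ℝ × ℝ → ℝ := fun p => hinv f p.1 p.2

/-- The quotient measure `μ̂ = (π_f)_* μ`. -/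
def quotM {C γ : ℝ} (F : Fol C γ) : Measure ℝ := muM.map (projF F.f)

/-- The leaf `L_y = {(x, f(x,y)) : x ∈ [0,1]}`. -/
def Leaf {C γ : ℝ} (F : Fol C γ) (y : ℝ) : Set (ℝ × ℝ) :=
  (fun x => (x, F.f x y)) '' unitInterval

/-- `(ν_y)` is a Rokhlin disintegration of Lebesgue measure on the square w.r.t. `π_f`. -/
def IsDisint {C γ : ℝ} (F : Fol C γ) (ν : ℝ → Measure (ℝ × ℝ)) : Prop :=
  (∀ y, IsProbabilityMeasure (ν y)) ∧
  (∀ E : Set (ℝ × ℝ), MeasurableSet E → Measurable fun y => ν y E) ∧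
  (∀ᵐ y ∂quotM F, ν y (Leaf F y) = 1) ∧
  (∀ E : Set (ℝ × ℝ), MeasurableSet E → muM E = ∫⁻ y, ν y E ∂quotM F)

/-- The element `P_i` of the partition `P_{f,n}`. -/
def Pelt (f : ℝ → ℝ → ℝ) (n i : ℕ) : Set (ℝ × ℝ) :=
  {p | p.1 ∈ unitInterval ∧ f p.1 ((i : ℝ) / 2 ^ n) ≤ p.2 ∧ p.2 < f p.1 (((i : ℝ) + 1) / 2 ^ n)}

/-- `Ĩ = [b₁,b₂] × [0,1]`. -/
def Itilde (b₁ b₂ : ℝ) : Set (ℝ × ℝ) := Icc b₁ b₂ ×ˢ unitInterval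

/-- The set `A_{n,m,I}`. -/
def Aset (C γ : ℝ) (n m : ℕ) (b₁ b₂ : ℝ) : Set (Fol C γ) :=
  {F | ∀ i < 2 ^ n,
    muM (Pelt F.f n i ∩ Itilde b₁ b₂) / muM (Pelt F.f n i) < 1 / (m : ℝ≥0∞) ∨
    1 - 1 / (m : ℝ≥0∞) < muM (Pelt F.f n i ∩ Itilde b₁ b₂) / muM (Pelt F.f n i)}

/-- The set `B_{m,I}`. -/
def Bset (C γ : ℝ) (m : ℕ) (b₁ b₂ : ℝ) : Set (Fol C γ) := ⋃ n : ℕ, Aset C γ n m b₁ b₂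

/-- The leaf measure `λ_y`: pushforward of 1-dimensional Lebesgue measure on `[0,1]`
under `x ↦ (x, f(x,y))`. -/
def leafMeas {C γ : ℝ} (F : Fol C γ) (y : ℝ) : Measure (ℝ × ℝ) :=
  (volume.restrict unitInterval).map fun x => (x, F.f x y)

/-! Interpolating `F₃` linearly in `y` on a fine grid preserves both Hölder bounds with the same
constant, because `t ↦ t ^ β` is concave and `t ↦ t ^ (1 / β)` is convex, and produces a
bi-Lipschitz function `g` that is close to `F₃`, with `∂g/∂x` close to `∂F₃/∂x`.

Now let `T ⊆ [0,1]` be measurable (for the theorem, `T = [b₁,b₂]`) such that neither `T` nor its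
complement is null. Divide `[0,1]` into `N = 2 ^ k` cells and replace, in each of them, the leaf of
`g` through the midpoint by the curve that divides the space between the two boundary leaves in the
ratio `θ x : 1 - θ x`, where `θ` is close to `1` on most of `T`, close to `0` on most of its
complement, and `θ 0 = 1 / 2`. Since `g` is bi-Lipschitz, the elements of the new partition have
width `θ x / N` or `(1 - θ x) / N` over `x`, up to constants independent of `N`. So each of them has
most of its mass over `T` or most of it over the complement.

The function `θ` does not depend on `N`, so both the displacement and its derivative in `x` tend to
`0` as `N → ∞`. The new function has difference quotients bounded above and below uniformly in `N`,
which gives the bi-Hölder bounds at small scales, while at large scales they follow from closeness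
to `g` at the cost of enlarging the constant. Finally, `d_α` is controlled by closeness in `C⁰` of
the functions and their derivatives in `x`, together with the `β`-Hölder bounds on functions and
inverses, since `α < β`. -/

section PiecewiseLinear

/-- The tent function, equal to `1` at the origin and vanishing outside `[-1, 1]`; its integer
translates are the nodal basis of `interp`. -/
def tent (t : ℝ) : ℝ := max 0 (1 - |t|)

/-- The continuous function on `[0, N]` that is linear between consecutive integers and takes the
value `v i` at each integer `i ≤ N`. -/
def interp (N : ℕ) (v : ℕ → ℝ) (t : ℝ) : ℝ :=
  ∑ i ∈ Finset.range (N + 1), v i * tent (t - i)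

variable {N : ℕ} {v : ℕ → ℝ}

lemma tent_of_abs_le {t : ℝ} (ht : |t| ≤ 1) : tent t = 1 - |t| :=
  max_eq_right (sub_nonneg.2 ht)

lemma tent_eq_zero {t : ℝ} (ht : 1 ≤ |t|) : tent t = 0 :=
  max_eq_left (sub_nonpos.2 ht)

@[fun_prop]
lemma continuous_tent : Continuous tent := by
  unfold tent
  fun_prop

lemma interp_cell {k : ℕ} (hk : k < N) {θ : ℝ} (hθ : θ ∈ unitInterval) :
    interp N v (k + θ) = (1 - θ) * v k + θ * v (k + 1) := by
  have hleft : tent (k + θ - k) = 1 - θ := by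
    rw [add_sub_cancel_left, tent_of_abs_le (abs_le.2 ⟨by linarith [hθ.1], hθ.2⟩),
      abs_of_nonneg hθ.1]
  have hright : tent (k + θ - (k + 1 : ℕ)) = θ := by
    have habs : |(k : ℝ) + θ - (k + 1 : ℕ)| = 1 - θ := by
      rw [abs_of_nonpos (by push_cast; linarith [hθ.2])]
      push_cast
      ring
    rw [tent_of_abs_le (habs.le.trans (by linarith [hθ.1])), habs, sub_sub_cancel]
  have hrest (i : ℕ) (hi : i ≠ k ∧ i ≠ k + 1) : tent (k + θ - i) = 0 := by
    refine tent_eq_zero ?_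
    rcases lt_or_gt_of_ne hi.1 with h | h
    · have : (i : ℝ) + 1 ≤ k := mod_cast h
      exact le_abs.2 (.inl (by linarith [hθ.1]))
    · have : (k : ℝ) + 2 ≤ i := mod_cast (by lia : k + 2 ≤ i)
      exact le_abs.2 (.inr (by linarith [hθ.2]))
  rw [interp, Finset.sum_eq_add_of_mem k (k + 1) (by simp; lia) (by simp; lia) (by simp)
    fun i _ hi => by rw [hrest i hi, mul_zero], hleft, hright]
  ring

lemma interp_natCast {k : ℕ} (hk : k ≤ N) : interp N v k = v k := by
  rw [interp, Finset.sum_eq_single_of_mem k (Finset.mem_range.2 (by lia)) fun i _ hi => ?_]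
  · simp [tent]
  · have : (1 : ℝ) ≤ |(k : ℝ) - i| := by
      exact_mod_cast Int.one_le_abs (sub_ne_zero.2 (Nat.cast_injective.ne hi.symm))
    rw [tent_eq_zero this, mul_zero]

lemma exists_eq_natCast_add {t : ℝ} (hN : 0 < N) (ht : t ∈ Icc (0 : ℝ) N) :
    ∃ k < N, ∃ θ ∈ unitInterval, t = k + θ := by
  rcases ht.2.lt_or_eq with hlt | rfl
  · exact ⟨⌊t⌋₊, (Nat.floor_lt ht.1).2 hlt, t - ⌊t⌋₊,
      ⟨sub_nonneg.2 (Nat.floor_le ht.1), by linarith [Nat.lt_floor_add_one t]⟩, by ring⟩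
  · exact ⟨N - 1, by lia, 1, unitInterval.one_mem, by rw [Nat.cast_pred hN]; ring⟩

lemma interp_mem_of_convex {s : Set ℝ} (hs : Convex ℝ s) (hN : 0 < N) {t : ℝ}
    (ht : t ∈ Icc (0 : ℝ) N) (hv : ∀ i ≤ N, |(i : ℝ) - t| ≤ 1 → v i ∈ s) : interp N v t ∈ s := by
  obtain ⟨k, hk, θ, hθ, rfl⟩ := exists_eq_natCast_add hN ht
  rw [interp_cell hk hθ]
  refine hs (hv k hk.le ?_) (hv (k + 1) hk ?_) (sub_nonneg.2 hθ.2) hθ.1 (by ring)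
  · rw [abs_le]; constructor <;> linarith [hθ.1, hθ.2]
  · rw [abs_le]; push_cast; constructor <;> linarith [hθ.1, hθ.2]

lemma interp_neg (t : ℝ) : interp N (-v) t = -interp N v t := by
  simp only [interp, Pi.neg_apply, neg_mul, Finset.sum_neg_distrib]

lemma interp_sub_node_le {ψ : ℝ → ℝ} (hψ : ConcaveOn ℝ (Ici 0) ψ)
    (hv : ∀ k l, k ≤ l → l ≤ N → v l - v k ≤ ψ (l - k)) {k l : ℕ} (hkl : k ≤ l) (hl : l < N)
    {θ : ℝ} (hθ : θ ∈ unitInterval) : interp N v (l + θ) - v k ≤ ψ (l + θ - k) := by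
  have hkl' : (k : ℝ) ≤ l := mod_cast hkl
  calc interp N v (l + θ) - v k
      = (1 - θ) * (v l - v k) + θ * (v (l + 1) - v k) := by rw [interp_cell hl hθ]; ring
    _ ≤ (1 - θ) * ψ (l - k) + θ * ψ ((l + 1 : ℕ) - k) := by
        gcongr
        · exact sub_nonneg.2 hθ.2
        · exact hv k l hkl hl.le
        · exact hθ.1
        · exact hv k (l + 1) (by lia) hl
    _ ≤ ψ ((1 - θ) * (l - k) + θ * ((l + 1 : ℕ) - k)) :=
        hψ.2 (mem_Ici.2 (by linarith)) (mem_Ici.2 (by push_cast; linarith))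
          (sub_nonneg.2 hθ.2) hθ.1 (by ring)
    _ = ψ (l + θ - k) := by push_cast; ring_nf

lemma interp_sub_interp_cell_le {ψ : ℝ → ℝ} (hψ : ConcaveOn ℝ (Ici 0) ψ)
    (hv : ∀ k l, k ≤ l → l ≤ N → v l - v k ≤ ψ (l - k)) {k : ℕ} (hk : k < N) {σ θ : ℝ}
    (hσ : σ ∈ unitInterval) (hθ : θ ∈ unitInterval) (hσθ : σ ≤ θ) :
    interp N v (k + θ) - interp N v (k + σ) ≤ ψ (θ - σ) := by
  have h0 : 0 ≤ ψ 0 := by simpa using hv k k le_rfl hk.le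
  have h1 : v (k + 1) - v k ≤ ψ 1 := by simpa using hv k (k + 1) (by lia) hk
  have hθσ : θ - σ ≤ 1 := by linarith [hθ.2, hσ.1]
  calc interp N v (k + θ) - interp N v (k + σ)
      = (θ - σ) * (v (k + 1) - v k) := by rw [interp_cell hk hθ, interp_cell hk hσ]; ring
    _ ≤ (1 - (θ - σ)) * ψ 0 + (θ - σ) * ψ 1 := by
        have := mul_nonneg (sub_nonneg.2 hθσ) h0
        have := mul_le_mul_of_nonneg_left h1 (sub_nonneg.2 hσθ)
        linarith
    _ ≤ ψ ((1 - (θ - σ)) * 0 + (θ - σ) * 1) :=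
        hψ.2 self_mem_Ici (mem_Ici.2 zero_le_one) (sub_nonneg.2 hθσ) (sub_nonneg.2 hσθ) (by ring)
    _ = ψ (θ - σ) := by ring_nf

lemma interp_sub_interp_cells_le {ψ : ℝ → ℝ} (hψ : ConcaveOn ℝ (Ici 0) ψ)
    (hv : ∀ k l, k ≤ l → l ≤ N → v l - v k ≤ ψ (l - k)) {k l : ℕ} (hkl : k < l) (hl : l < N)
    {σ θ : ℝ} (hσ : σ ∈ unitInterval) (hθ : θ ∈ unitInterval) :
    interp N v (l + θ) - interp N v (k + σ) ≤ ψ (l + θ - (k + σ)) := by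
  have hkl' : (k : ℝ) + 1 ≤ l := mod_cast hkl
  calc interp N v (l + θ) - interp N v (k + σ)
      = (1 - σ) * (interp N v (l + θ) - v k) + σ * (interp N v (l + θ) - v (k + 1)) := by
        rw [interp_cell (hkl.trans hl) hσ]; ring
    _ ≤ (1 - σ) * ψ (l + θ - k) + σ * ψ (l + θ - (k + 1 : ℕ)) := by
        gcongr
        · exact sub_nonneg.2 hσ.2
        · exact interp_sub_node_le hψ hv hkl.le hl hθ
        · exact hσ.1
        · exact interp_sub_node_le hψ hv hkl hl hθ
    _ ≤ ψ ((1 - σ) * (l + θ - k) + σ * (l + θ - (k + 1 : ℕ))) :=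
        hψ.2 (mem_Ici.2 (by linarith [hθ.1])) (mem_Ici.2 (by push_cast; linarith [hθ.1]))
          (sub_nonneg.2 hσ.2) hσ.1 (by ring)
    _ = ψ (l + θ - (k + σ)) := by push_cast; ring_nf

lemma interp_sub_interp_le {ψ : ℝ → ℝ} (hψ : ConcaveOn ℝ (Ici 0) ψ) (hN : 0 < N)
    (hv : ∀ k l, k ≤ l → l ≤ N → v l - v k ≤ ψ (l - k)) {s t : ℝ} (hs : 0 ≤ s) (hst : s ≤ t)
    (ht : t ≤ N) : interp N v t - interp N v s ≤ ψ (t - s) := by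
  rcases hst.eq_or_lt with rfl | hlt
  · simpa using hv 0 0 le_rfl N.zero_le
  obtain ⟨k, hk, σ, hσ, rfl⟩ := exists_eq_natCast_add hN ⟨hs, hst.trans ht⟩
  obtain ⟨l, hl, θ, hθ, rfl⟩ := exists_eq_natCast_add hN ⟨hs.trans hst, ht⟩
  rcases lt_trichotomy k l with hkl | rfl | hlk
  · exact interp_sub_interp_cells_le hψ hv hkl hl hσ hθ
  · rw [add_sub_add_left_eq_sub]
    exact interp_sub_interp_cell_le hψ hv hk hσ hθ (by linarith)
  · have hlk' : (l : ℝ) + 1 ≤ k := mod_cast hlk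
    linarith [hθ.2, hσ.1]

lemma le_interp_sub_interp {φ : ℝ → ℝ} (hφ : ConvexOn ℝ (Ici 0) φ) (hN : 0 < N)
    (hv : ∀ k l, k ≤ l → l ≤ N → φ (l - k) ≤ v l - v k) {s t : ℝ} (hs : 0 ≤ s) (hst : s ≤ t)
    (ht : t ≤ N) : φ (t - s) ≤ interp N v t - interp N v s := by
  have hneg := interp_sub_interp_le (v := -v) hφ.neg hN
    (fun k l hkl hl => by
      simp only [Pi.neg_apply]
      linarith [hv k l hkl hl])
    hs hst ht
  rw [interp_neg, interp_neg, Pi.neg_apply] at hneg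
  linarith

end PiecewiseLinear

section Powers

lemma exists_forall_mul_abs_rpow_le (K : ℝ) {q η : ℝ} (hq : 0 < q) (hη : 0 < η) :
    ∃ δ > 0, ∀ t : ℝ, |t| ≤ δ → K * |t| ^ q ≤ η := by
  have hcont : Continuous fun t : ℝ => K * |t| ^ q :=
    continuous_const.mul (continuous_abs.rpow_const fun _ => .inr hq.le)
  have hlim : Tendsto (fun t : ℝ => K * |t| ^ q) (𝓝 0) (𝓝 0) := by
    simpa [Real.zero_rpow hq.ne'] using hcont.tendsto 0
  obtain ⟨δ, hδ, hball⟩ := Metric.nhds_basis_closedBall.eventually_iff.1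
    (hlim.eventually (eventually_le_nhds hη))
  exact ⟨δ, hδ, fun t ht => hball (by simpa using ht)⟩

lemma exists_forall_mul_rpow_le_mul_rpow (K : ℝ) {p q a : ℝ} (hpq : p < q) (ha : 0 < a) :
    ∃ r > 0, ∀ t : ℝ, 0 < t → t ≤ r → K * t ^ q ≤ a * t ^ p := by
  obtain ⟨r, hr, hle⟩ := exists_forall_mul_abs_rpow_le K (sub_pos.2 hpq) ha
  refine ⟨r, hr, fun t ht htr => ?_⟩
  have habs : |t| = t := abs_of_pos ht
  calc K * t ^ q = K * |t| ^ (q - p) * t ^ p := by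
        rw [habs, mul_assoc, ← Real.rpow_add ht, sub_add_cancel]
    _ ≤ a * t ^ p := by gcongr; exact hle t (habs.trans_le htr)

lemma exists_forall_le_mul_rpow_of_close {p p' q L r : ℝ} (hq : 0 ≤ q) (hp : p' < p) (hr : 0 < r)
    (hL : ∀ t, 0 < t → t ≤ r → L * t ≤ p * t ^ q) :
    ∃ η > 0, ∀ t u w : ℝ, 0 < t → u ≤ L * t → w ≤ p' * t ^ q → u ≤ w + 2 * η → u ≤ p * t ^ q := by
  have : 0 < p - p' := sub_pos.2 hp
  refine ⟨(p - p') * r ^ q / 2, by positivity, fun t u w ht hu hw huw => ?_⟩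
  rcases le_total t r with htr | hrt
  · exact hu.trans (hL t ht htr)
  · have : (p - p') * r ^ q ≤ (p - p') * t ^ q := by gcongr
    linarith

end Powers

section IncrementBounds

/-- For every `x ∈ [0,1]`, the increments of `g x` over intervals of length `t` in `[0,1]` lie
between `φ t` and `ψ t`. -/
def HasIncrementBounds (φ ψ : ℝ → ℝ) (g : ℝ → ℝ → ℝ) : Prop :=
  ∀ x ∈ unitInterval, ∀ y ∈ unitInterval, ∀ z ∈ unitInterval, y ≤ z →
    g x z - g x y ∈ Icc (φ (z - y)) (ψ (z - y))

/-- The `(C, β)`-bi-Hölder condition for functions that increase in the second variable, with the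
absolute values removed. -/
def IncreasingBiHolder (C β : ℝ) (g : ℝ → ℝ → ℝ) : Prop :=
  HasIncrementBounds (fun t => C⁻¹ * t ^ (1 / β)) (fun t => C * t ^ β) g

/-- Every `g x`, `x ∈ [0,1]`, is increasing with difference quotients between `c` and `L`. -/
def IncreasingBiLipschitz (c L : ℝ) (g : ℝ → ℝ → ℝ) : Prop :=
  HasIncrementBounds (fun t => c * t) (fun t => L * t) g

variable {C C' β c L : ℝ} {g : ℝ → ℝ → ℝ}

lemma IncreasingBiHolder.abs_sub_mem (hC : 0 < C) (hg : IncreasingBiHolder C β g) {x y z : ℝ}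
    (hx : x ∈ unitInterval) (hy : y ∈ unitInterval) (hz : z ∈ unitInterval) :
    |g x z - g x y| ∈ Icc (C⁻¹ * |z - y| ^ (1 / β)) (C * |z - y| ^ β) := by
  wlog hyz : y ≤ z generalizing y z
  · rw [abs_sub_comm (g x z), abs_sub_comm z]
    exact this hz hy (le_of_not_ge hyz)
  have hmem := hg x hx y hy z hz hyz
  have hyz' : 0 ≤ z - y := sub_nonneg.2 hyz
  have hnonneg : 0 ≤ C⁻¹ * (z - y) ^ (1 / β) := by positivity
  rwa [abs_of_nonneg hyz', abs_of_nonneg (hnonneg.trans hmem.1)]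

lemma IncreasingBiHolder.biHolderLower (hC : 0 < C) (hg : IncreasingBiHolder C β g) :
    BiHolderLower C β g :=
  fun _ hx _ hy _ hz _ => (hg.abs_sub_mem hC hx hy hz).1

lemma IncreasingBiHolder.biHolderUpper (hC : 0 < C) (hg : IncreasingBiHolder C β g) :
    BiHolderUpper C β g :=
  fun _ hx _ hy _ hz _ => (hg.abs_sub_mem hC hx hy hz).2

lemma exists_increasingBiHolder_of_close (hC' : 0 < C') (hCC : C' < C) (hβ₀ : 0 < β) (hβ₁ : β < 1)
    (hc : 0 < c) :
    ∃ η > 0, ∀ f g : ℝ → ℝ → ℝ, IncreasingBiHolder C' β f → IncreasingBiLipschitz c L g →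
      (∀ x ∈ unitInterval, ∀ y ∈ unitInterval, |g x y - f x y| ≤ η) →
      IncreasingBiHolder C β g := by
  have hβ' : 1 < 1 / β := one_lt_one_div hβ₀ hβ₁
  obtain ⟨r₁, hr₁, hsmall₁⟩ := exists_forall_mul_rpow_le_mul_rpow L hβ₁ (hC'.trans hCC)
  obtain ⟨r₂, hr₂, hsmall₂⟩ := exists_forall_mul_rpow_le_mul_rpow C⁻¹ hβ' hc
  obtain ⟨η₁, hη₁, hupper⟩ := exists_forall_le_mul_rpow_of_close (L := L) hβ₀.le hCC hr₁
    fun t ht htr => by simpa using hsmall₁ t ht htr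
  obtain ⟨η₂, hη₂, hlower⟩ := exists_forall_le_mul_rpow_of_close (p' := -C'⁻¹) (p := -C⁻¹)
    (L := -c) (zero_le_one.trans hβ'.le) (neg_lt_neg (inv_strictAnti₀ hC' hCC)) hr₂
    fun t ht htr => by simpa using hsmall₂ t ht htr
  refine ⟨min η₁ η₂, lt_min hη₁ hη₂, fun f g hf hg hfg x hx y hy z hz hyz => ?_⟩
  rcases hyz.eq_or_lt with rfl | hlt
  · simp [Real.zero_rpow, hβ₀.ne']
  have hη₁' := min_le_left η₁ η₂
  have hη₂' := min_le_right η₁ η₂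
  have hy' := abs_le.1 (hfg x hx y hy)
  have hz' := abs_le.1 (hfg x hx z hz)
  have hfyz := hf x hx y hy z hz hyz
  have hgyz := hg x hx y hy z hz hyz
  have hlow := hlower (z - y) (-(g x z - g x y)) (-(f x z - f x y)) (sub_pos.2 hlt)
    (by linarith [hgyz.1]) (by linarith [hfyz.1]) (by linarith)
  exact ⟨by linarith, hupper (z - y) _ (f x z - f x y) (sub_pos.2 hlt) hgyz.2 hfyz.2 (by linarith)⟩

end IncrementBounds

section Distance

/-- `f` and `g` are within `η` of each other on the unit square, and so are `fx` and `gx`. -/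
def C1Close (η : ℝ) (f fx g gx : ℝ → ℝ → ℝ) : Prop :=
  ∀ x ∈ unitInterval, ∀ y ∈ unitInterval, |f x y - g x y| ≤ η ∧ |fx x y - gx x y| ≤ η

variable {C C' α β ε η η' : ℝ} {f fx g gx h hx : ℝ → ℝ → ℝ}

lemma C1Close.mono (hηη' : η ≤ η') (hfg : C1Close η f fx g gx) : C1Close η' f fx g gx :=
  fun x hx y hy => (hfg x hx y hy).imp hηη'.trans' hηη'.trans'

lemma C1Close.trans (hfg : C1Close η f fx g gx) (hgh : C1Close η' g gx h hx) :
    C1Close (η + η') f fx h hx :=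
  fun x hx y hy => ⟨(abs_sub_le _ _ _).trans (add_le_add (hfg x hx y hy).1 (hgh x hx y hy).1),
    (abs_sub_le _ _ _).trans (add_le_add (hfg x hx y hy).2 (hgh x hx y hy).2)⟩

namespace IsFol

lemma const_pos (F : IsFol C β f fx) : 0 < C := by
  have h := F.upper 0 unitInterval.zero_mem 0 unitInterval.zero_mem 1 unitInterval.one_mem
    zero_ne_one
  rw [F.eq_id 0 unitInterval.zero_mem, F.eq_id 1 unitInterval.one_mem] at h
  have : (1 : ℝ) ≤ C := by simpa using h
  linarith

lemma mono_const (hCC : C' ≤ C) (F : IsFol C' β f fx) : IsFol C β f fx := by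
  have hC' := F.const_pos
  exact { F with
    lower x hx y hy z hz hyz := (F.lower x hx y hy z hz hyz).trans' (by gcongr)
    upper x hx y hy z hz hyz := (F.upper x hx y hy z hz hyz).trans (by gcongr) }

lemma abs_sub_le (hβ : 0 < β) (F : IsFol C β f fx) {x y z : ℝ} (hx : x ∈ unitInterval)
    (hy : y ∈ unitInterval) (hz : z ∈ unitInterval) : |f x z - f x y| ≤ C * |z - y| ^ β := by
  rcases eq_or_ne y z with rfl | hyz
  · simp [Real.zero_rpow hβ.ne']
  · exact F.upper x hx y hy z hz hyz

lemma abs_sub_le_rpow_abs_sub (hβ : 0 < β) (F : IsFol C β f fx) {x y z : ℝ}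
    (hx : x ∈ unitInterval) (hy : y ∈ unitInterval) (hz : z ∈ unitInterval) :
    |z - y| ≤ C ^ β * |f x z - f x y| ^ β := by
  have hC := F.const_pos
  rcases eq_or_ne y z with rfl | hyz
  · simp [Real.zero_rpow hβ.ne']
  · have hlow := (inv_mul_le_iff₀ hC).1 (F.lower x hx y hy z hz hyz)
    calc |z - y| = (|z - y| ^ (1 / β)) ^ β := by
          rw [← Real.rpow_mul (abs_nonneg _), one_div_mul_cancel hβ.ne', Real.rpow_one]
      _ ≤ (C * |f x z - f x y|) ^ β := by gcongr
      _ = C ^ β * |f x z - f x y| ^ β := Real.mul_rpow hC.le (abs_nonneg _)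

lemma exists_modulus_snd (hβ : 0 < β) (F : IsFol C β f fx) (hη : 0 < η) :
    ∃ δ > 0, ∀ x ∈ unitInterval, ∀ y ∈ unitInterval, ∀ z ∈ unitInterval, |z - y| ≤ δ →
      |f x z - f x y| ≤ η ∧ |fx x z - fx x y| ≤ η := by
  obtain ⟨δ₁, hδ₁, hf⟩ := exists_forall_mul_abs_rpow_le C hβ hη
  have huc := (isCompact_Icc.prod isCompact_Icc).uniformContinuousOn_of_continuous F.derivCont
  obtain ⟨δ₂, hδ₂, hfx⟩ := Metric.uniformContinuousOn_iff_le.1 huc η hη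
  refine ⟨min δ₁ δ₂, lt_min hδ₁ hδ₂, fun x hx y hy z hz hyz => ⟨?_, ?_⟩⟩
  · exact (F.abs_sub_le hβ hx hy hz).trans (hf _ (hyz.trans (min_le_left _ _)))
  · refine hfx (x, z) ⟨hx, hz⟩ (x, y) ⟨hx, hy⟩ ?_
    rw [Prod.dist_eq, dist_self, max_eq_right dist_nonneg]
    exact hyz.trans (min_le_right _ _)

lemma continuousOn_snd (hβ : 0 < β) (F : IsFol C β f fx) {x : ℝ} (hx : x ∈ unitInterval) :
    ContinuousOn (f x) unitInterval := by
  refine Metric.continuousOn_iff.2 fun y hy η hη => ?_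
  obtain ⟨δ, hδ, hmod⟩ := F.exists_modulus_snd hβ (half_pos hη)
  exact ⟨δ, hδ, fun z hz hzy => ((hmod x hx y hy z hz hzy.le).1).trans_lt (half_lt_self hη)⟩

lemma strictMonoOn_snd (hβ : 0 < β) (F : IsFol C β f fx) {x : ℝ} (hx : x ∈ unitInterval) :
    StrictMonoOn (f x) unitInterval := by
  refine (F.continuousOn_snd hβ hx).strictMonoOn_of_injOn_Icc zero_le_one ?_ fun y hy z hz hyz => ?_
  · rw [F.eq_bot x hx, F.eq_top x hx]
    exact zero_le_one
  · have hle := F.abs_sub_le_rpow_abs_sub hβ hx hz hy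
    rw [hyz, sub_self, abs_zero, Real.zero_rpow hβ.ne', mul_zero] at hle
    exact sub_eq_zero.1 (abs_nonpos_iff.1 hle)

lemma increasingBiHolder (hβ : 0 < β) (F : IsFol C β f fx) : IncreasingBiHolder C β f := by
  intro x hx y hy z hz hyz
  rcases hyz.eq_or_lt with rfl | hlt
  · simp [Real.zero_rpow, hβ.ne']
  have hlow := F.lower x hx y hy z hz hlt.ne
  have hup := F.upper x hx y hy z hz hlt.ne
  rw [abs_of_pos (sub_pos.2 hlt), abs_of_pos (sub_pos.2 (F.strictMonoOn_snd hβ hx hy hz hlt))]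
    at hlow hup
  exact ⟨hlow, hup⟩

lemma exists_apply_eq (hβ : 0 < β) (F : IsFol C β f fx) {x z : ℝ} (hx : x ∈ unitInterval)
    (hz : z ∈ unitInterval) : ∃ y ∈ unitInterval, f x y = z := by
  have hsurj := intermediate_value_Icc zero_le_one (F.continuousOn_snd hβ hx)
  rw [F.eq_bot x hx, F.eq_top x hx] at hsurj
  exact hsurj hz

lemma hinv_mem (hβ : 0 < β) (F : IsFol C β f fx) {x z : ℝ} (hx : x ∈ unitInterval)
    (hz : z ∈ unitInterval) : hinv f x z ∈ unitInterval :=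
  Function.invFunOn_mem (F.exists_apply_eq hβ hx hz)

lemma apply_hinv (hβ : 0 < β) (F : IsFol C β f fx) {x z : ℝ} (hx : x ∈ unitInterval)
    (hz : z ∈ unitInterval) : f x (hinv f x z) = z :=
  Function.invFunOn_eq (F.exists_apply_eq hβ hx hz)

lemma abs_hinv_sub_hinv_le (hβ : 0 < β) (F : IsFol C β f fx) {x y z : ℝ} (hx : x ∈ unitInterval)
    (hy : y ∈ unitInterval) (hz : z ∈ unitInterval) :
    |hinv f x z - hinv f x y| ≤ C ^ β * |z - y| ^ β := by
  simpa only [F.apply_hinv hβ hx hy, F.apply_hinv hβ hx hz] using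
    F.abs_sub_le_rpow_abs_sub hβ hx (F.hinv_mem hβ hx hy) (F.hinv_mem hβ hx hz)

lemma abs_hinv_sub_le {u z x : ℝ} (hβ : 0 < β) (F : IsFol C β f fx) (hx : x ∈ unitInterval)
    (hz : z ∈ unitInterval) (hu : u ∈ unitInterval) :
    |hinv f x z - u| ≤ C ^ β * |f x u - z| ^ β := by
  simpa only [F.apply_hinv hβ hx hz, abs_sub_comm z] using
    F.abs_sub_le_rpow_abs_sub hβ hx hu (F.hinv_mem hβ hx hz)

end IsFol

lemma exists_forall_holDist_le (K : ℝ) (hα : 0 ≤ α) (hαβ : α < β) (hε : 0 < ε) :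
    ∃ ρ > 0, ∀ h k : ℝ → ℝ,
      (∀ y ∈ unitInterval, ∀ z ∈ unitInterval, |h z - h y| ≤ K * |z - y| ^ β) →
      (∀ y ∈ unitInterval, ∀ z ∈ unitInterval, |k z - k y| ≤ K * |z - y| ^ β) →
      (∀ y ∈ unitInterval, |h y - k y| ≤ ρ) → holDist α h k ≤ ε := by
  obtain ⟨r, hr, hsmall⟩ := exists_forall_mul_rpow_le_mul_rpow (2 * K) hαβ hε
  refine ⟨ε * r ^ α / 2, by positivity, fun h k hh hk hhk => Real.sSup_le ?_ hε.le⟩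
  rintro _ ⟨y, hy, z, hz, hyz, rfl⟩
  have hpos : 0 < |z - y| := abs_pos.2 (sub_ne_zero.2 hyz.symm)
  rw [div_le_iff₀ (by positivity)]
  rcases le_total |z - y| r with hle | hle
  · calc |h z - k z - (h y - k y)| = |h z - h y - (k z - k y)| := by ring_nf
      _ ≤ |h z - h y| + |k z - k y| := abs_sub _ _
      _ ≤ 2 * K * |z - y| ^ β := by linarith [hh y hy z hz, hk y hy z hz]
      _ ≤ ε * |z - y| ^ α := hsmall _ hpos hle
  · calc |h z - k z - (h y - k y)| ≤ |h z - k z| + |h y - k y| := abs_sub _ _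
      _ ≤ ε * r ^ α := by linarith [hhk y hy, hhk z hz]
      _ ≤ ε * |z - y| ^ α := by gcongr

lemma C1Close.dalpha_le (hη : 0 ≤ η) (hfg : C1Close η f fx g gx)
    (hhol : ∀ x ∈ unitInterval, holDist α (f x) (g x) ≤ η ∧ holDist α (hinv f x) (hinv g x) ≤ η) :
    dalpha α f fx g gx ≤ 3 * η := by
  have hC0 : C0dist f g ≤ η := by
    refine Real.sSup_le ?_ hη
    rintro _ ⟨x, hx, y, hy, rfl⟩
    exact (hfg x hx y hy).1
  have hC0' : C0dist fx gx ≤ η := by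
    refine Real.sSup_le ?_ hη
    rintro _ ⟨x, hx, y, hy, rfl⟩
    exact (hfg x hx y hy).2
  have hsup : sSup {r | ∃ x ∈ unitInterval,
      r = max (holDist α (f x) (g x)) (holDist α (hinv f x) (hinv g x))} ≤ η := by
    refine Real.sSup_le ?_ hη
    rintro _ ⟨x, hx, rfl⟩
    exact max_le (hhol x hx).1 (hhol x hx).2
  unfold dalpha
  linarith

lemma exists_forall_dalpha_lt (C : ℝ) (hα : 0 ≤ α) (hαβ : α < β) (hε : 0 < ε) :
    ∃ η > 0, ∀ f fx g gx : ℝ → ℝ → ℝ, IsFol C β f fx → IsFol C β g gx → C1Close η f fx g gx →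
      dalpha α f fx g gx < ε := by
  have hβ : 0 < β := hα.trans_lt hαβ
  have hε₄ : 0 < ε / 4 := by positivity
  obtain ⟨ρ₁, hρ₁, hdist⟩ := exists_forall_holDist_le C hα hαβ hε₄
  obtain ⟨ρ₂, hρ₂, hdist_inv⟩ := exists_forall_holDist_le (C ^ β) hα hαβ hε₄
  obtain ⟨δ, hδ, hsmall⟩ := exists_forall_mul_abs_rpow_le (C ^ β) hβ hρ₂
  refine ⟨min (ε / 4) (min ρ₁ δ), by positivity, fun f fx g gx F G hfg => ?_⟩
  have hfg₀ : C1Close (ε / 4) f fx g gx := hfg.mono (min_le_left _ _)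
  have hfg₁ : C1Close ρ₁ f fx g gx := hfg.mono ((min_le_right _ _).trans (min_le_left _ _))
  have hfg₂ : C1Close δ f fx g gx := hfg.mono ((min_le_right _ _).trans (min_le_right _ _))
  refine (hfg₀.dalpha_le hε₄.le fun x hx => ⟨?_, ?_⟩).trans_lt (by linarith)
  · exact hdist _ _ (fun y hy z hz => F.abs_sub_le hβ hx hy hz)
      (fun y hy z hz => G.abs_sub_le hβ hx hy hz) fun y hy => (hfg₁ x hx y hy).1
  · refine hdist_inv _ _ (fun y hy z hz => F.abs_hinv_sub_hinv_le hβ hx hy hz)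
      (fun y hy z hz => G.abs_hinv_sub_hinv_le hβ hx hy hz) fun z hz => ?_
    have hg := G.hinv_mem hβ hx hz
    refine (F.abs_hinv_sub_le hβ hx hz hg).trans (hsmall _ ?_)
    simpa only [G.apply_hinv hβ hx hz] using (hfg₂ x hx _ hg).1

end Distance

section NodeFamilies

/-- Data for piecewise linear interpolation of a function in `F_(C,β)`: `v x i` is the value of the
interpolant at `(x, i / N)` and `vx` is the derivative of `v` in `x`. -/
structure IsNodeFamily (N : ℕ) (v vx : ℝ → ℕ → ℝ) : Prop where
  hasDeriv : ∀ i ≤ N, ∀ x ∈ unitInterval,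
    HasDerivWithinAt (fun x' => v x' i) (vx x i) unitInterval x
  derivCont : ∀ i ≤ N, ContinuousOn (fun x => vx x i) unitInterval
  eq_div : ∀ i ≤ N, v 0 i = i / N
  eq_bot : ∀ x ∈ unitInterval, v x 0 = 0
  eq_top : ∀ x ∈ unitInterval, v x N = 1

/-- The function on the square that is linear in `y` between consecutive multiples of `1 / N` and
takes the value `v x i` at `(x, i / N)`. -/
def leafInterp (N : ℕ) (v : ℝ → ℕ → ℝ) (x y : ℝ) : ℝ := interp N (v x) (N * y)

variable {N : ℕ} {v vx : ℝ → ℕ → ℝ} {C β c L η : ℝ}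

lemma natCast_mul_mem_Icc {y : ℝ} (hy : y ∈ unitInterval) : (N : ℝ) * y ∈ Icc (0 : ℝ) N :=
  ⟨mul_nonneg N.cast_nonneg hy.1, mul_le_of_le_one_right N.cast_nonneg hy.2⟩

lemma natCast_div_mem_unitInterval {i : ℕ} (hi : i ≤ N) : (i : ℝ) / N ∈ unitInterval :=
  ⟨by positivity, div_le_one_of_le₀ (mod_cast hi) N.cast_nonneg⟩

lemma leafInterp_natCast_div {i : ℕ} (hN : 0 < N) (hi : i ≤ N) (x : ℝ) :
    leafInterp N v x (i / N) = v x i := by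
  rw [leafInterp, mul_div_cancel₀ _ (by positivity), interp_natCast hi]

lemma abs_leafInterp_sub_le (hN : 0 < N) {x y a : ℝ} (hy : y ∈ unitInterval)
    (hv : ∀ i ≤ N, |(i : ℝ) / N - y| ≤ 1 / N → |v x i - a| ≤ η) :
    |leafInterp N v x y - a| ≤ η := by
  have : (0 : ℝ) < N := mod_cast hN
  refine interp_mem_of_convex (convex_closedBall a η) hN (natCast_mul_mem_Icc hy)
    fun i hi hdist => hv i hi ?_
  have hscale : (i : ℝ) / N - y = (i - N * y) / N := by field_simp
  rw [hscale, abs_div, Nat.abs_cast]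
  gcongr

lemma hasIncrementBounds_leafInterp {φ ψ : ℝ → ℝ} (hφ : ConvexOn ℝ (Ici 0) φ)
    (hψ : ConcaveOn ℝ (Ici 0) ψ) (hN : 0 < N)
    (hv : ∀ x ∈ unitInterval, ∀ k l, k ≤ l → l ≤ N →
      v x l - v x k ∈ Icc (φ (l / N - k / N)) (ψ (l / N - k / N))) :
    HasIncrementBounds φ ψ (leafInterp N v) := by
  intro x hx y hy z hz hyz
  have hN' : (N : ℝ) ≠ 0 := by positivity
  have hscale : Ici (0 : ℝ) ⊆ ((N : ℝ)⁻¹ • LinearMap.id (R := ℝ) (M := ℝ)) ⁻¹' Ici 0 :=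
    fun t ht => by simpa using mul_nonneg (inv_nonneg.2 N.cast_nonneg) (mem_Ici.1 ht)
  have hφN := (hφ.comp_linearMap ((N : ℝ)⁻¹ • LinearMap.id)).subset hscale (convex_Ici 0)
  have hψN := (hψ.comp_linearMap ((N : ℝ)⁻¹ • LinearMap.id)).subset hscale (convex_Ici 0)
  have hstep (s t : ℝ) : (N : ℝ)⁻¹ * (t - s) = t / N - s / N := by field_simp
  have hcancel (s t : ℝ) : (N : ℝ)⁻¹ * (N * t - N * s) = t - s := by field_simp
  have hy' := (natCast_mul_mem_Icc (N := N) hy).1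
  have hz' := (natCast_mul_mem_Icc (N := N) hz).2
  have hyz' : (N : ℝ) * y ≤ N * z := by gcongr
  constructor
  · simpa [leafInterp, hcancel] using le_interp_sub_interp hφN hN (fun k l hkl hl => by
      simpa [hstep] using (hv x hx k l hkl hl).1) hy' hyz' hz'
  · simpa [leafInterp, hcancel] using interp_sub_interp_le hψN hN (fun k l hkl hl => by
      simpa [hstep] using (hv x hx k l hkl hl).2) hy' hyz' hz'

lemma sub_mem_Icc_of_forall_succ_sub_mem {u : ℕ → ℝ} {a b : ℝ}
    (hu : ∀ i < N, u (i + 1) - u i ∈ Icc a b) {k l : ℕ} (hkl : k ≤ l) (hl : l ≤ N) :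
    u l - u k ∈ Icc (a * (l - k)) (b * (l - k)) := by
  induction l, hkl using Nat.le_induction with
  | base => simp
  | succ l _ ih =>
    have hih := ih (by lia)
    have hstep := hu l hl
    push_cast
    constructor <;> linarith [hih.1, hih.2, hstep.1, hstep.2]

lemma increasingBiLipschitz_leafInterp (hN : 0 < N)
    (hv : ∀ x ∈ unitInterval, ∀ i < N, v x (i + 1) - v x i ∈ Icc (c / N) (L / N)) :
    IncreasingBiLipschitz c L (leafInterp N v) := by
  refine hasIncrementBounds_leafInterp ((LinearMap.mul ℝ ℝ c).convexOn (convex_Ici 0))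
    ((LinearMap.mul ℝ ℝ L).concaveOn (convex_Ici 0)) hN fun x hx k l hkl hl => ?_
  have hscale (a : ℝ) : a * (l / N - k / N) = a / N * (l - k) := by ring
  rw [hscale, hscale]
  exact sub_mem_Icc_of_forall_succ_sub_mem (hv x hx) hkl hl

lemma increasingBiHolder_leafInterp (hC : 0 ≤ C) (hβ₀ : 0 < β) (hβ₁ : β ≤ 1) (hN : 0 < N)
    {f : ℝ → ℝ → ℝ} (hf : IncreasingBiHolder C β f) :
    IncreasingBiHolder C β (leafInterp N fun x i => f x (i / N)) :=
  hasIncrementBounds_leafInterp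
    ((convexOn_rpow ((one_le_div hβ₀).2 hβ₁)).smul (inv_nonneg.2 hC))
    ((Real.concaveOn_rpow hβ₀.le hβ₁).smul hC) hN fun x hx k l hkl hl =>
      hf x hx _ (natCast_div_mem_unitInterval (hkl.trans hl)) _ (natCast_div_mem_unitInterval hl)
        (by gcongr)

namespace IsNodeFamily

lemma hasDerivWithinAt_leafInterp (hv : IsNodeFamily N v vx) (y : ℝ) {x : ℝ}
    (hx : x ∈ unitInterval) :
    HasDerivWithinAt (fun x' => leafInterp N v x' y) (leafInterp N vx x y) unitInterval x :=
  HasDerivWithinAt.fun_sum fun i hi =>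
    (hv.hasDeriv i (Finset.mem_range_succ_iff.1 hi) x hx).mul_const _

lemma continuousOn_leafInterp_deriv (hv : IsNodeFamily N v vx) :
    ContinuousOn (fun p : ℝ × ℝ => leafInterp N vx p.1 p.2) MSq := by
  unfold leafInterp interp
  refine continuousOn_finsetSum _ fun i hi => ContinuousOn.mul ?_ (by fun_prop)
  exact (hv.derivCont i (Finset.mem_range_succ_iff.1 hi)).comp continuousOn_fst fun p hp => hp.1

lemma leafInterp_zero (hv : IsNodeFamily N v vx) (hN : 0 < N) {y : ℝ} (hy : y ∈ unitInterval) :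
    leafInterp N v 0 y = y := by
  have hN' : (N : ℝ) ≠ 0 := by positivity
  obtain ⟨k, hk, θ, hθ, hcell⟩ := exists_eq_natCast_add hN (natCast_mul_mem_Icc hy)
  rw [leafInterp, hcell, interp_cell hk hθ, hv.eq_div k hk.le, hv.eq_div (k + 1) hk,
    eq_div_of_mul_eq hN' ((mul_comm _ _).trans hcell)]
  push_cast
  ring

lemma isFol (hv : IsNodeFamily N v vx) (hN : 0 < N) (hC : 0 < C)
    (hinc : IncreasingBiHolder C β (leafInterp N v)) :
    IsFol C β (leafInterp N v) (leafInterp N vx) := by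
  have hbot (x : ℝ) (hx : x ∈ unitInterval) : leafInterp N v x 0 = 0 := by
    simpa [hv.eq_bot x hx] using leafInterp_natCast_div (v := v) hN N.zero_le x
  have htop (x : ℝ) (hx : x ∈ unitInterval) : leafInterp N v x 1 = 1 := by
    have hN' : (N : ℝ) ≠ 0 := by positivity
    simpa [hv.eq_top x hx, div_self hN'] using leafInterp_natCast_div (v := v) hN le_rfl x
  have hmono {x y z : ℝ} (hx : x ∈ unitInterval) (hy : y ∈ unitInterval) (hz : z ∈ unitInterval)
      (hyz : y ≤ z) : leafInterp N v x y ≤ leafInterp N v x z := by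
    have : 0 ≤ z - y := sub_nonneg.2 hyz
    exact sub_nonneg.1 ((hinc x hx y hy z hz hyz).1.trans' (by positivity))
  exact {
    mapsTo x hx y hy := ⟨(hbot x hx).symm.trans_le (hmono hx unitInterval.zero_mem hy hy.1),
      (hmono hx hy unitInterval.one_mem hy.2).trans_eq (htop x hx)⟩
    hasDeriv y _ x hx := hv.hasDerivWithinAt_leafInterp y hx
    derivCont := hv.continuousOn_leafInterp_deriv
    eq_id y hy := hv.leafInterp_zero hN hy
    eq_bot := hbot
    eq_top := htop
    lower := hinc.biHolderLower hC
    upper := hinc.biHolderUpper hC }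

end IsNodeFamily

variable {f fx : ℝ → ℝ → ℝ}

lemma IsFol.isNodeFamily (F : IsFol C β f fx) (hN : 0 < N) :
    IsNodeFamily N (fun x i => f x (i / N)) fun x i => fx x (i / N) where
  hasDeriv i hi x hx := F.hasDeriv _ (natCast_div_mem_unitInterval hi) x hx
  derivCont i hi := F.derivCont.comp (f := fun x : ℝ => (x, (i : ℝ) / N)) (by fun_prop)
    fun x hx => ⟨hx, natCast_div_mem_unitInterval hi⟩
  eq_div i hi := F.eq_id _ (natCast_div_mem_unitInterval hi)
  eq_bot x hx := by simpa using F.eq_bot x hx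
  eq_top x hx := by
    have hN' : (N : ℝ) ≠ 0 := by positivity
    simpa [div_self hN'] using F.eq_top x hx

lemma IsFol.exists_increasingBiLipschitz_close (hβ₀ : 0 < β) (hβ₁ : β ≤ 1) (F : IsFol C β f fx)
    (hη : 0 < η) :
    ∃ g gx : ℝ → ℝ → ℝ, ∃ c > 0, ∃ L > 0, IsFol C β g gx ∧ IncreasingBiLipschitz c L g ∧
      C1Close η g gx f fx := by
  have hC := F.const_pos
  obtain ⟨δ, hδ, hmod⟩ := F.exists_modulus_snd hβ₀ hη
  obtain ⟨n, hn⟩ := exists_nat_one_div_lt hδ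
  set N := n + 1
  have hN : 0 < N := n.succ_pos
  have hN' : (0 : ℝ) < N := mod_cast hN
  have hNδ : 1 / (N : ℝ) ≤ δ := by simpa [N] using hn.le
  have hnode {i : ℕ} (hi : i ≤ N) := natCast_div_mem_unitInterval hi
  refine ⟨leafInterp N fun x i => f x (i / N), leafInterp N fun x i => fx x (i / N),
    N * (C⁻¹ * (1 / N) ^ (1 / β)), by positivity, N * (C * (1 / N) ^ β), by positivity,
    (F.isNodeFamily hN).isFol hN hC
      (increasingBiHolder_leafInterp hC.le hβ₀ hβ₁ hN (F.increasingBiHolder hβ₀)),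
    increasingBiLipschitz_leafInterp hN fun x hx i hi => ?_, fun x hx y hy => ⟨?_, ?_⟩⟩
  · have hstep : ((i + 1 : ℕ) : ℝ) / N - i / N = 1 / N := by push_cast; ring
    rw [mul_div_cancel_left₀ _ hN'.ne', mul_div_cancel_left₀ _ hN'.ne', ← hstep]
    exact F.increasingBiHolder hβ₀ x hx _ (hnode hi.le) _ (hnode hi) (by gcongr; lia)
  · exact abs_leafInterp_sub_le hN hy fun i hi hiy =>
      (hmod x hx y hy _ (hnode hi) (hiy.trans hNδ)).1
  · exact abs_leafInterp_sub_le hN hy fun i hi hiy =>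
      (hmod x hx y hy _ (hnode hi) (hiy.trans hNδ)).2

end NodeFamilies

section Zigzag

/-- The sequence obtained from `u` by inserting, between `u j` and `u (j + 1)`, the point that
divides the interval from `u j` to `u (j + 1)` in the ratio `s : 1 - s`. -/
def zigzag (s : ℝ) (u : ℕ → ℝ) (i : ℕ) : ℝ :=
  if Even i then u (i / 2) else u (i / 2) + s * (u (i / 2 + 1) - u (i / 2))

/-- The derivative of `zigzag s u` when `s` and `u` have derivatives `s'` and `u'`. -/
def zigzagDeriv (s s' : ℝ) (u u' : ℕ → ℝ) (i : ℕ) : ℝ :=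
  if Even i then u' (i / 2)
  else u' (i / 2) + (s' * (u (i / 2 + 1) - u (i / 2)) + s * (u' (i / 2 + 1) - u' (i / 2)))

/-- A `C¹` function with values in `[τ, 1 - τ]` that equals `1 / 2` at `0`. It prescribes the ratio
in which the leaf through the middle of a cell divides the cell; the value at `0` makes the
resulting foliation start at the identity. -/
structure IsSplitRatio (τ : ℝ) (θ : ℝ → ℝ) : Prop where
  contDiff : ContDiff ℝ 1 θ
  mem : ∀ x, θ x ∈ Icc τ (1 - τ)
  zero : θ 0 = 1 / 2

variable {N : ℕ} {u u' : ℕ → ℝ} {v vx : ℝ → ℕ → ℝ} {g gx : ℝ → ℝ → ℝ} {θ : ℝ → ℝ}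
  {C C' β τ c L S s s' a b η : ℝ}

lemma zigzag_two_mul (j : ℕ) : zigzag s u (2 * j) = u j := by
  simp [zigzag]

lemma zigzag_two_mul_add_one (j : ℕ) :
    zigzag s u (2 * j + 1) = u j + s * (u (j + 1) - u j) := by
  simp [zigzag, Nat.mul_add_div]

lemma zigzagDeriv_two_mul (j : ℕ) : zigzagDeriv s s' u u' (2 * j) = u' j := by
  simp [zigzagDeriv]

lemma zigzagDeriv_two_mul_add_one (j : ℕ) :
    zigzagDeriv s s' u u' (2 * j + 1) =
      u' j + (s' * (u (j + 1) - u j) + s * (u' (j + 1) - u' j)) := by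
  simp [zigzagDeriv, Nat.mul_add_div]

lemma zigzag_succ_sub (i : ℕ) :
    zigzag s u (i + 1) - zigzag s u i =
      (if Even i then s else 1 - s) * (u (i / 2 + 1) - u (i / 2)) := by
  obtain ⟨j, rfl | rfl⟩ := i.even_or_odd'
  · simp [zigzag_two_mul, zigzag_two_mul_add_one]
  · rw [show 2 * j + 1 + 1 = 2 * (j + 1) by ring, zigzag_two_mul, zigzag_two_mul_add_one]
    simp only [Nat.not_even_bit1, if_false, Nat.mul_add_div two_pos, Nat.reduceDiv, add_zero]
    ring

lemma abs_add_mul_sub_sub_le {p q : ℝ} (hs : s ∈ Icc (0 : ℝ) 1) (hp : |p - a| ≤ η)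
    (hq : |q - a| ≤ η) : |p + s * (q - p) - a| ≤ η := by
  simpa [AffineMap.lineMap_apply, Real.dist_eq, add_comm] using
    (convex_closedBall a η).lineMap_mem (x := p) (y := q) hp hq hs

lemma abs_zigzag_sub_le (hs : s ∈ Icc (0 : ℝ) 1) (i : ℕ)
    (hu : ∀ j, 2 * j ≤ i + 1 → i ≤ 2 * j + 1 → |u j - a| ≤ η) : |zigzag s u i - a| ≤ η := by
  obtain ⟨j, rfl | rfl⟩ := i.even_or_odd'
  · rw [zigzag_two_mul]
    exact hu j (by lia) (by lia)
  · rw [zigzag_two_mul_add_one]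
    exact abs_add_mul_sub_sub_le hs (hu j (by lia) (by lia)) (hu (j + 1) (by lia) (by lia))

lemma abs_zigzagDeriv_sub_le (hs : s ∈ Icc (0 : ℝ) 1) (hs' : |s'| ≤ S) (i : ℕ)
    (hu : ∀ j, 2 * j ≤ i + 1 → i ≤ 2 * j + 1 → |u j - a| ≤ η ∧ |u' j - b| ≤ η) :
    |zigzagDeriv s s' u u' i - b| ≤ (1 + 2 * S) * η := by
  have hS : 0 ≤ S := (abs_nonneg s').trans hs'
  obtain ⟨j, rfl | rfl⟩ := i.even_or_odd'
  · rw [zigzagDeriv_two_mul]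
    have hj := (hu j (by lia) (by lia)).2
    nlinarith [(abs_nonneg _).trans hj]
  · rw [zigzagDeriv_two_mul_add_one]
    obtain ⟨hj, hj'⟩ := hu j (by lia) (by lia)
    obtain ⟨hk, hk'⟩ := hu (j + 1) (by lia) (by lia)
    have hjk : |u (j + 1) - u j| ≤ 2 * η := by
      linarith [abs_sub_le (u (j + 1)) a (u j), abs_sub_comm a (u j)]
    calc |u' j + (s' * (u (j + 1) - u j) + s * (u' (j + 1) - u' j)) - b|
        = |s' * (u (j + 1) - u j) + (u' j + s * (u' (j + 1) - u' j) - b)| := by ring_nf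
      _ ≤ |s'| * |u (j + 1) - u j| + |u' j + s * (u' (j + 1) - u' j) - b| :=
        (abs_add_le _ _).trans_eq (by rw [abs_mul])
      _ ≤ S * (2 * η) + η := by gcongr; exact abs_add_mul_sub_sub_le hs hj' hk'
      _ = (1 + 2 * S) * η := by ring

namespace IsSplitRatio

lemma continuous_deriv (hθ : IsSplitRatio τ θ) : Continuous (deriv θ) :=
  hθ.contDiff.continuous_deriv le_rfl

lemma hasDerivAt (hθ : IsSplitRatio τ θ) (x : ℝ) : HasDerivAt θ (deriv θ x) x :=
  (hθ.contDiff.differentiable one_ne_zero x).hasDerivAt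

lemma mem_Icc_zero_one (hτ : 0 ≤ τ) (hθ : IsSplitRatio τ θ) (x : ℝ) : θ x ∈ Icc (0 : ℝ) 1 :=
  Icc_subset_Icc hτ (by linarith) (hθ.mem x)

lemma ite_even_mem (hθ : IsSplitRatio τ θ) (x : ℝ) (i : ℕ) :
    (if Even i then θ x else 1 - θ x) ∈ Icc τ (1 - τ) := by
  have hθx := hθ.mem x
  split_ifs
  · exact hθx
  · constructor <;> linarith [hθx.1, hθx.2]

end IsSplitRatio

lemma IsNodeFamily.zigzag (hv : IsNodeFamily N v vx) (hθ : IsSplitRatio τ θ) :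
    IsNodeFamily (2 * N) (fun x => zigzag (θ x) (v x))
      fun x => zigzagDeriv (θ x) (deriv θ x) (v x) (vx x) where
  hasDeriv i hi x hx := by
    obtain ⟨j, rfl | rfl⟩ := i.even_or_odd'
    · simpa only [zigzag_two_mul, zigzagDeriv_two_mul] using hv.hasDeriv j (by lia) x hx
    · simp only [zigzag_two_mul_add_one, zigzagDeriv_two_mul_add_one]
      have hj := hv.hasDeriv j (by lia) x hx
      have hj' := hv.hasDeriv (j + 1) (by lia) x hx
      exact hj.add ((hθ.hasDerivAt x).hasDerivWithinAt.mul (hj'.sub hj))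
  derivCont i hi := by
    have hθ_cont := hθ.contDiff.continuous
    have hθ'_cont := hθ.continuous_deriv
    have hv_cont (k : ℕ) (hk : k ≤ N) : ContinuousOn (fun x => v x k) unitInterval :=
      HasDerivWithinAt.continuousOn (hv.hasDeriv k hk)
    obtain ⟨j, rfl | rfl⟩ := i.even_or_odd'
    · simpa only [zigzagDeriv_two_mul] using hv.derivCont j (by lia)
    · simp only [zigzagDeriv_two_mul_add_one]
      have hj := hv_cont j (by lia)
      have hk := hv_cont (j + 1) (by lia)
      have hj' := hv.derivCont j (by lia)
      have hk' := hv.derivCont (j + 1) (by lia)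
      fun_prop
  eq_div i hi := by
    obtain ⟨j, rfl | rfl⟩ := i.even_or_odd'
    · rw [zigzag_two_mul, hv.eq_div j (by lia)]
      push_cast
      rw [mul_div_mul_left _ _ two_ne_zero]
    · rw [zigzag_two_mul_add_one, hθ.zero, hv.eq_div j (by lia), hv.eq_div (j + 1) (by lia)]
      push_cast
      ring
  eq_bot x hx := (zigzag_two_mul 0).trans (hv.eq_bot x hx)
  eq_top x hx := by rw [zigzag_two_mul, hv.eq_top x hx]

lemma abs_natCast_div_sub_le_of_near_two_mul (hN : 0 < N) {i j : ℕ} (hij : 2 * j ≤ i + 1)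
    (hji : i ≤ 2 * j + 1) {y : ℝ} (hiy : |(i : ℝ) / (2 * N : ℕ) - y| ≤ 1 / (2 * N : ℕ)) :
    |(j : ℝ) / N - y| ≤ 1 / N := by
  have hij' : (2 * j : ℝ) ≤ i + 1 := mod_cast hij
  have hji' : (i : ℝ) ≤ 2 * j + 1 := mod_cast hji
  have hnear : |(j : ℝ) / N - i / (2 * N : ℕ)| ≤ 1 / (2 * N : ℕ) := by
    have hdiff : (j : ℝ) / N - i / (2 * N : ℕ) = (2 * j - i) / (2 * N : ℕ) := by
      push_cast
      field_simp
    rw [hdiff, abs_div, Nat.abs_cast]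
    gcongr
    exact abs_le.2 ⟨by linarith, by linarith⟩
  calc |(j : ℝ) / N - y| ≤ 1 / (2 * N : ℕ) + 1 / (2 * N : ℕ) :=
        (abs_sub_le _ _ _).trans (add_le_add hnear hiy)
    _ = 1 / N := by
      push_cast
      field_simp
      norm_num

namespace IncreasingBiLipschitz

lemma natCast_succ_div_sub_mem (hg : IncreasingBiLipschitz c L g) {x : ℝ} (hx : x ∈ unitInterval)
    {j : ℕ} (hj : j < N) : g x ((j + 1 : ℕ) / N) - g x (j / N) ∈ Icc (c / N) (L / N) := by
  have hstep : ((j + 1 : ℕ) : ℝ) / N - j / N = 1 / N := by push_cast; ring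
  simpa only [hstep, mul_one_div] using hg x hx _ (natCast_div_mem_unitInterval hj.le) _
    (natCast_div_mem_unitInterval hj) (by gcongr; exact j.le_succ)

lemma zigzag_succ_sub_mem (hg : IncreasingBiLipschitz c L g) (hτ : 0 ≤ τ) (hθ : IsSplitRatio τ θ)
    {x : ℝ} (hx : x ∈ unitInterval) {i : ℕ} (hi : i < 2 * N) :
    zigzag (θ x) (fun j => g x (j / N)) (i + 1) - zigzag (θ x) (fun j => g x (j / N)) i ∈
      Icc ((if Even i then θ x else 1 - θ x) * (c / N))
        ((if Even i then θ x else 1 - θ x) * (L / N)) := by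
  have hratio := hτ.trans (hθ.ite_even_mem x i).1
  have hcell := hg.natCast_succ_div_sub_mem hx (show i / 2 < N by lia)
  rw [zigzag_succ_sub]
  exact ⟨by gcongr; exact hcell.1, by gcongr; exact hcell.2⟩

lemma leafInterp_zigzag (hg : IncreasingBiLipschitz c L g) (hc : 0 ≤ c) (hτ : 0 ≤ τ)
    (hθ : IsSplitRatio τ θ) (hN : 0 < N) :
    IncreasingBiLipschitz (2 * τ * c) (2 * L)
      (leafInterp (2 * N) fun x => zigzag (θ x) fun i => g x (i / N)) := by
  refine increasingBiLipschitz_leafInterp (by lia) fun x hx i hi =>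
    Icc_subset_Icc ?_ ?_ (hg.zigzag_succ_sub_mem hτ hθ hx hi)
  · calc 2 * τ * c / (2 * N : ℕ) = τ * (c / N) := by push_cast; field_simp
      _ ≤ _ := by gcongr; exact (hθ.ite_even_mem x i).1
  · have hcL := hg.natCast_succ_div_sub_mem hx hN
    have hL : 0 ≤ L / N := (by positivity : 0 ≤ c / N).trans (hcL.1.trans hcL.2)
    calc _ ≤ 1 * (L / N) := by gcongr; linarith [(hθ.ite_even_mem x i).2]
      _ = 2 * L / (2 * N : ℕ) := by push_cast; field_simp

end IncreasingBiLipschitz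

lemma c1Close_leafInterp_zigzag (hN : 0 < N) (hτ : 0 ≤ τ) (hθ : IsSplitRatio τ θ)
    (hS : ∀ x ∈ unitInterval, |deriv θ x| ≤ S)
    (hmod : ∀ x ∈ unitInterval, ∀ y ∈ unitInterval, ∀ z ∈ unitInterval, |z - y| ≤ 1 / N →
      |g x z - g x y| ≤ η ∧ |gx x z - gx x y| ≤ η) :
    C1Close ((1 + 2 * S) * η) (leafInterp (2 * N) fun x => zigzag (θ x) fun i => g x (i / N))
      (leafInterp (2 * N) fun x => zigzagDeriv (θ x) (deriv θ x) (fun i => g x (i / N))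
        fun i => gx x (i / N)) g gx := by
  intro x hx y hy
  have hS₀ : 0 ≤ S := (abs_nonneg _).trans (hS x hx)
  have hη : 0 ≤ η := (abs_nonneg _).trans (hmod x hx y hy y hy (by simp)).1
  have hnode (i : ℕ) (hi : i ≤ 2 * N) (hiy : |(i : ℝ) / (2 * N : ℕ) - y| ≤ 1 / (2 * N : ℕ))
      (j : ℕ) (hij : 2 * j ≤ i + 1) (hji : i ≤ 2 * j + 1) :
      |g x (j / N) - g x y| ≤ η ∧ |gx x (j / N) - gx x y| ≤ η :=
    hmod x hx y hy _ (natCast_div_mem_unitInterval (by lia))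
      (abs_natCast_div_sub_le_of_near_two_mul hN hij hji hiy)
  have hθx := hθ.mem_Icc_zero_one hτ x
  constructor
  · refine abs_leafInterp_sub_le (by lia) hy fun i hi hiy => ?_
    refine (abs_zigzag_sub_le hθx i fun j hij hji => (hnode i hi hiy j hij hji).1).trans ?_
    exact le_mul_of_one_le_left hη (by linarith)
  · exact abs_leafInterp_sub_le (by lia) hy fun i hi hiy =>
      abs_zigzagDeriv_sub_le hθx (hS x hx) i (hnode i hi hiy)

lemma IsFol.eventually_exists_zigzag_close (hCC : C' < C) (hβ₀ : 0 < β) (hβ₁ : β < 1)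
    (G : IsFol C' β g gx) (hc : 0 < c) (hg : IncreasingBiLipschitz c L g) (hτ : 0 < τ)
    (hθ : IsSplitRatio τ θ) (hη : 0 < η) :
    ∀ᶠ N : ℕ in atTop, ∃ f fx : ℝ → ℝ → ℝ, IsFol C β f fx ∧ C1Close η f fx g gx ∧
      ∀ x ∈ unitInterval, ∀ i < 2 * N,
        f x ((i + 1) / (2 * N)) - f x (i / (2 * N)) ∈
          Icc ((if Even i then θ x else 1 - θ x) * (c / N))
            ((if Even i then θ x else 1 - θ x) * (L / N)) := by
  obtain ⟨S, hS⟩ := isCompact_Icc.exists_bound_of_continuousOn (s := unitInterval)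
    hθ.continuous_deriv.continuousOn
  have hS₀ : 0 ≤ S := (abs_nonneg _).trans (hS 0 unitInterval.zero_mem)
  obtain ⟨η₁, hη₁, hHolder⟩ := exists_increasingBiHolder_of_close (c := 2 * τ * c) (L := 2 * L)
    G.const_pos hCC hβ₀ hβ₁ (by positivity)
  set κ := min η η₁ / (1 + 2 * S)
  have hκ : 0 < κ := by positivity
  have hκ' : (1 + 2 * S) * κ = min η η₁ := mul_div_cancel₀ _ (by positivity)
  obtain ⟨δ, hδ, hmod⟩ := G.exists_modulus_snd hβ₀ hκ
  filter_upwards [eventually_gt_atTop 0,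
    (tendsto_one_div_atTop_nhds_zero_nat (𝕜 := ℝ)).eventually_le_const hδ] with N hN hNδ
  set f := leafInterp (2 * N) fun x => zigzag (θ x) fun i => g x (i / N)
  have hclose := c1Close_leafInterp_zigzag hN hτ.le hθ hS fun x hx y hy z hz hyz =>
    hmod x hx y hy z hz (hyz.trans hNδ)
  rw [hκ'] at hclose
  have hf := hHolder g f (G.increasingBiHolder hβ₀)
    (hg.leafInterp_zigzag hc.le hτ.le hθ hN) fun x hx y hy =>
    (hclose x hx y hy).1.trans (min_le_right _ _)
  refine ⟨f, _, ((G.isNodeFamily hN).zigzag hθ).isFol (by lia) (G.const_pos.trans hCC) hf,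
    hclose.mono (min_le_left _ _), fun x hx i hi => ?_⟩
  have hval (k : ℕ) (hk : k ≤ 2 * N) :
      f x (k / (2 * N)) = zigzag (θ x) (fun j => g x (j / N)) k := by
    simpa using leafInterp_natCast_div (by lia) hk x
  rw [← Nat.cast_succ, hval (i + 1) hi, hval i hi.le]
  exact hg.zigzag_succ_sub_mem hτ.le hθ hx hi

end Zigzag

section SplitRatio

lemma exists_isSplitRatio {A B : Set ℝ} {τ : ℝ} (hA : IsClosed A) (hB : IsClosed B)
    (hAB : Disjoint A B) (hA₀ : 0 ∉ A) (hB₀ : 0 ∉ B) (hτ : τ ≤ 1 / 2) :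
    ∃ θ, IsSplitRatio τ θ ∧ (∀ x ∈ A, θ x = 1 - τ) ∧ ∀ x ∈ B, θ x = τ := by
  have hsep {s t : Set ℝ} (hs : IsClosed s) (ht : IsClosed t) (hst : Disjoint s t) :
      ∃ ρ : ℝ → ℝ, ContDiff ℝ 1 ρ ∧ EqOn ρ 0 s ∧ EqOn ρ 1 t ∧ ∀ x, ρ x ∈ Icc (0 : ℝ) 1 := by
    obtain ⟨ρ, h0, h1, hρ⟩ :=
      exists_contMDiffMap_zero_one_of_isClosed (modelWithCornersSelf ℝ ℝ) hs ht hst (n := 1)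
    exact ⟨ρ, ρ.contMDiff.contDiff, h0, h1, hρ⟩
  obtain ⟨ρ₁, hρ₁, hρ₁B, hρ₁A, hρ₁I⟩ := hsep (isClosed_singleton.union hB) hA
    (disjoint_union_left.2 ⟨disjoint_singleton_left.2 hA₀, hAB.symm⟩)
  obtain ⟨ρ₂, hρ₂, hρ₂B, hρ₂A, hρ₂I⟩ := hsep hB (isClosed_singleton.union hA)
    (disjoint_union_right.2 ⟨disjoint_singleton_right.2 hB₀, hAB.symm⟩)
  refine ⟨fun x => τ + (1 - 2 * τ) * ((ρ₁ x + ρ₂ x) / 2), ⟨by fun_prop, fun x => ?_, ?_⟩,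
    fun x hx => ?_, fun x hx => ?_⟩
  · have h₁ := hρ₁I x
    have h₂ := hρ₂I x
    constructor <;> nlinarith [h₁.1, h₁.2, h₂.1, h₂.2]
  · simp only [hρ₁B (.inl rfl), hρ₂A (.inl rfl), Pi.zero_apply, Pi.one_apply]
    ring
  · simp only [hρ₁A hx, hρ₂A (.inr hx), Pi.one_apply]
    ring
  · simp only [hρ₁B (.inr hx), hρ₂B hx, Pi.zero_apply]
    ring

lemma exists_isClosed_notMem_measure_sdiff_lt {X : Type*} [TopologicalSpace X] [T1Space X]
    [MeasurableSpace X] [OpensMeasurableSpace X] {μ : Measure X} [μ.WeaklyRegular]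
    [NullSingletonClass μ] {T : Set X} (hT : MeasurableSet T) (hμT : μ T ≠ ∞) (a : X) {ε : ℝ≥0∞}
    (hε : ε ≠ 0) : ∃ A ⊆ T, IsClosed A ∧ a ∉ A ∧ μ (T \ A) < ε := by
  have hμTa : μ (T \ {a}) ≠ ∞ := ne_top_of_le_ne_top hμT (measure_mono sdiff_subset)
  obtain ⟨A, hAT, hA, hμA⟩ :=
    (hT.diff (measurableSet_singleton a)).exists_isClosed_sdiff_lt hμTa hε
  refine ⟨A, fun x hx => (hAT hx).1, hA, fun ha => (hAT ha).2 rfl, ?_⟩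
  rwa [← measure_sdiff_null (measure_singleton a), sdiff_sdiff_comm]

lemma mul_setLIntegral_lt_setLIntegral {X : Type*} [MeasurableSpace X] {μ : Measure X}
    {A B S T : Set X} {h : X → ℝ≥0∞} {R ε : ℝ≥0∞} (hA : MeasurableSet A) (hB : MeasurableSet B)
    (hAT : A ⊆ T) (hTA : μ (T \ A) ≤ ε) (hSB : μ (S \ B) ≤ ε) (hh : ∀ x, h x ≤ 1)
    (hhA : ∀ x ∈ A, 2⁻¹ ≤ h x) (hhB : ∀ x ∈ B, h x ≤ ε)
    (hsmall : ε * (2 * (R * (μ univ + 1)) + 1) < μ T) :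
    R * ∫⁻ x in S, h x ∂μ < ∫⁻ x in T, h x ∂μ := by
  have hupper : ∫⁻ x in S, h x ∂μ ≤ ε * (μ univ + 1) := by
    calc ∫⁻ x in S, h x ∂μ ≤ ∫⁻ x in B ∪ S \ B, h x ∂μ :=
          lintegral_mono_set (by simp)
      _ ≤ ∫⁻ x in B, h x ∂μ + ∫⁻ x in S \ B, h x ∂μ := lintegral_union_le _ _ _
      _ ≤ ∫⁻ _ in B, ε ∂μ + ∫⁻ _ in S \ B, 1 ∂μ := by
          gcongr ?_ + ?_
          · exact setLIntegral_mono' hB hhB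
          · exact lintegral_mono hh
      _ = ε * μ B + μ (S \ B) := by rw [setLIntegral_const, setLIntegral_one]
      _ ≤ ε * μ univ + ε := by gcongr; exact subset_univ _
      _ = ε * (μ univ + 1) := by ring
  have hlower : μ T ≤ 2 * ∫⁻ x in T, h x ∂μ + ε := by
    calc μ T ≤ μ (T ∩ A) + μ (T \ A) := measure_le_inter_add_sdiff _ _ _
      _ ≤ μ A + ε := by gcongr; exact inter_subset_right
      _ = 2 * ∫⁻ _ in A, 2⁻¹ ∂μ + ε := by
          rw [setLIntegral_const, ← mul_assoc,
            ENNReal.mul_inv_cancel two_ne_zero ENNReal.ofNat_ne_top, one_mul]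
      _ ≤ 2 * ∫⁻ x in T, h x ∂μ + ε := by
          gcongr 2 * ?_ + ε
          exact (setLIntegral_mono' hA hhA).trans (lintegral_mono_set hAT)
  have hlt : 2 * (R * ∫⁻ x in S, h x ∂μ) + ε < 2 * ∫⁻ x in T, h x ∂μ + ε :=
    calc 2 * (R * ∫⁻ x in S, h x ∂μ) + ε ≤ 2 * (R * (ε * (μ univ + 1))) + ε := by gcongr
      _ = ε * (2 * (R * (μ univ + 1)) + 1) := by ring
      _ < 2 * ∫⁻ x in T, h x ∂μ + ε := hsmall.trans_le hlower
  exact (ENNReal.mul_lt_mul_iff_right two_ne_zero ENNReal.ofNat_ne_top).1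
    (lt_of_add_lt_add_right hlt)

lemma exists_isSplitRatio_mul_setLIntegral_lt {μ : Measure ℝ} [IsFiniteMeasure μ]
    [NullSingletonClass μ] {T : Set ℝ} (hT : MeasurableSet T) (hμT : μ T ≠ 0) (hμTc : μ Tᶜ ≠ 0)
    {R : ℝ≥0∞} (hR : R ≠ ∞) :
    ∃ τ > 0, ∃ θ, IsSplitRatio τ θ ∧
      R * ∫⁻ x in Tᶜ, ENNReal.ofReal (θ x) ∂μ < ∫⁻ x in T, ENNReal.ofReal (θ x) ∂μ ∧
      R * ∫⁻ x in T, ENNReal.ofReal (1 - θ x) ∂μ < ∫⁻ x in Tᶜ, ENNReal.ofReal (1 - θ x) ∂μ := by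
  set K := 2 * (R * (μ univ + 1)) + 1
  have hK : K ≠ ∞ := by finiteness
  obtain ⟨τ, hτ, hτK⟩ := ENNReal.exists_nnreal_pos_mul_lt hK
    (b := min (min (μ T) (μ Tᶜ)) 2⁻¹) (by simp [hμT, hμTc])
  have hτ_half : (τ : ℝ) ≤ 1 / 2 := by
    have h : (τ : ℝ≥0∞) ≤ (2⁻¹ : NNReal) :=
      calc (τ : ℝ≥0∞) ≤ τ * K := le_mul_of_one_le_right' le_add_self
        _ ≤ 2⁻¹ := (hτK.trans_le (min_le_right _ _)).le
        _ = (2⁻¹ : NNReal) := by simp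
    simpa using NNReal.coe_le_coe.2 (ENNReal.coe_le_coe.1 h)
  have hτ₀ : (τ : ℝ≥0∞) ≠ 0 := by simpa using hτ.ne'
  obtain ⟨A, hAT, hA, hA₀, hTA⟩ :=
    exists_isClosed_notMem_measure_sdiff_lt hT (measure_ne_top μ T) 0 hτ₀
  obtain ⟨B, hBT, hB, hB₀, hTB⟩ :=
    exists_isClosed_notMem_measure_sdiff_lt hT.compl (measure_ne_top μ Tᶜ) 0 hτ₀
  obtain ⟨θ, hθ, hθA, hθB⟩ := exists_isSplitRatio hA hB
    (disjoint_compl_right.mono hAT hBT) hA₀ hB₀ hτ_half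
  have hhalf {y : ℝ} (hy : y = 1 - τ) : 2⁻¹ ≤ ENNReal.ofReal y := by
    rw [← ENNReal.ofReal_ofNat 2, ← ENNReal.ofReal_inv_of_pos two_pos]
    exact ENNReal.ofReal_le_ofReal (by linarith)
  have hsmall {y : ℝ} (hy : y = τ) : ENNReal.ofReal y ≤ τ := by
    rw [hy, ENNReal.ofReal_coe_nnreal]
  refine ⟨τ, hτ, θ, hθ, ?_, ?_⟩
  · refine mul_setLIntegral_lt_setLIntegral hA.measurableSet hB.measurableSet hAT hTA.le hTB.le
      (fun x => ENNReal.ofReal_le_one.2 (hθ.mem_Icc_zero_one τ.2 x).2)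
      (fun x hx => hhalf (hθA x hx)) (fun x hx => hsmall (hθB x hx))
      (hτK.trans_le ((min_le_left _ _).trans (min_le_left _ _)))
  · refine mul_setLIntegral_lt_setLIntegral hB.measurableSet hA.measurableSet hBT hTB.le hTA.le
      (fun x => ENNReal.ofReal_le_one.2 (by linarith [(hθ.mem_Icc_zero_one τ.2 x).1]))
      (fun x hx => hhalf (by rw [hθB x hx])) (fun x hx => hsmall (by rw [hθA x hx]; ring))
      (hτK.trans_le ((min_le_left _ _).trans (min_le_right _ _)))

end SplitRatio

section Unbalanced

/-- A measure is `R`-unbalanced between `T` and its complement if one of the two sets carries more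
than `R` times the mass of the other. This is the form in which the dichotomy defining `Aset` is
propagated through comparisons of measures. -/
def IsUnbalanced {X : Type*} [MeasurableSpace X] (R : ℝ≥0∞) (μ : Measure X) (T : Set X) : Prop :=
  R * μ T < μ Tᶜ ∨ R * μ Tᶜ < μ T

variable {X : Type*} [MeasurableSpace X] {μ ν : Measure X} {T : Set X} {R K a : ℝ≥0∞}

lemma IsUnbalanced.of_smul_le_of_le_smul (h : IsUnbalanced (K * R) μ T) (ha₀ : a ≠ 0)
    (ha : a ≠ ∞) (hle : a • μ ≤ ν) (hge : ν ≤ (a * K) • μ) : IsUnbalanced R ν T := by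
  have key {A B : Set X} (hAB : K * R * μ A < μ B) : R * ν A < ν B :=
    calc R * ν A ≤ R * (a * K * μ A) := by gcongr; exact hge A
      _ = a * (K * R * μ A) := by ring
      _ < a * μ B := (ENNReal.mul_lt_mul_iff_right ha₀ ha).2 hAB
      _ ≤ ν B := hle B
  exact h.imp key key

lemma IsUnbalanced.withDensity_of_ae_mem_Icc {ρ W : X → ℝ} {a b : ℝ}
    (h : IsUnbalanced (ENNReal.ofReal (b / a) * R)
      (μ.withDensity fun x => ENNReal.ofReal (ρ x)) T)
    (ha : 0 < a) (hb : 0 ≤ b) (hW : ∀ᵐ x ∂μ, W x ∈ Icc (ρ x * a) (ρ x * b)) :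
    IsUnbalanced R (μ.withDensity fun x => ENNReal.ofReal (W x)) T := by
  refine h.of_smul_le_of_le_smul (a := ENNReal.ofReal a) (by simpa using ha)
    ENNReal.ofReal_ne_top ?_ ?_
  · rw [← withDensity_smul' _ _ ENNReal.ofReal_ne_top]
    refine withDensity_mono (hW.mono fun x hx => ?_)
    rw [Pi.smul_apply, smul_eq_mul, mul_comm, ← ENNReal.ofReal_mul' ha.le]
    exact ENNReal.ofReal_le_ofReal hx.1
  · rw [← ENNReal.ofReal_mul ha.le, mul_div_cancel₀ _ ha.ne',
      ← withDensity_smul' _ _ ENNReal.ofReal_ne_top]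
    refine withDensity_mono (hW.mono fun x hx => ?_)
    rw [Pi.smul_apply, smul_eq_mul, mul_comm, ← ENNReal.ofReal_mul' hb]
    exact ENNReal.ofReal_le_ofReal hx.2

lemma measure_div_measure_univ_lt_one_div [IsFiniteMeasure μ] (hR : R ≠ ∞) (h : R * μ T < μ Tᶜ) :
    μ T / μ univ < 1 / R := by
  have hlt : R * μ T < μ univ := h.trans_le (measure_mono (subset_univ _))
  have huniv : μ univ ≠ 0 := hlt.ne_bot
  have hratio : μ T / μ univ ≠ ∞ := ENNReal.div_ne_top (measure_ne_top μ _) huniv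
  rw [ENNReal.lt_div_iff_mul_lt (.inr hratio) (.inl hR), mul_comm, ← mul_div_assoc,
    ENNReal.div_lt_iff (.inl huniv) (.inl (measure_ne_top μ _)), one_mul]
  exact hlt

lemma IsUnbalanced.div_lt_or_lt_div [IsFiniteMeasure μ] (h : IsUnbalanced R μ T)
    (hT : MeasurableSet T) (hR : R ≠ ∞) (hR₁ : 1 ≤ R) :
    μ T / μ univ < 1 / R ∨ 1 - 1 / R < μ T / μ univ := by
  refine h.imp (measure_div_measure_univ_lt_one_div hR) fun h' => ?_
  have hlt : μ Tᶜ / μ univ < 1 / R :=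
    measure_div_measure_univ_lt_one_div hR (by rwa [compl_compl])
  have huniv : μ univ ≠ 0 := (h'.trans_le (measure_mono (subset_univ _))).ne_bot
  have hsum : μ T / μ univ + μ Tᶜ / μ univ = 1 := by
    rw [← ENNReal.add_div, measure_add_measure_compl hT,
      ENNReal.div_self huniv (measure_ne_top μ _)]
  have hratio : μ T / μ univ ≠ ∞ := ENNReal.div_ne_top (measure_ne_top μ T) huniv
  refine ENNReal.sub_lt_of_lt_add (by simpa using hR₁) ?_
  calc 1 = μ T / μ univ + μ Tᶜ / μ univ := hsum.symm
    _ < μ T / μ univ + 1 / R := ENNReal.add_lt_add_left hratio hlt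

lemma isUnbalanced_of_measure_eq_zero [NeZero μ] (hT : μ T = 0 ∨ μ Tᶜ = 0) :
    IsUnbalanced R μ T := by
  have hpos : μ T + μ Tᶜ ≠ 0 := fun h => NeZero.ne μ <| Measure.measure_univ_eq_zero.1 <|
    le_zero_iff.1 <| (union_compl_self T ▸ measure_union_le T Tᶜ).trans h.le
  refine hT.imp (fun h => ?_) fun h => ?_
  · simpa [h, pos_iff_ne_zero] using hpos
  · simpa [h, pos_iff_ne_zero] using hpos

lemma exists_isSplitRatio_forall_isUnbalanced {μ : Measure ℝ} [IsFiniteMeasure μ] [NeZero μ]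
    [NullSingletonClass μ] {T : Set ℝ} (hT : MeasurableSet T) (hR : R ≠ ∞) :
    ∃ τ > 0, ∃ θ, IsSplitRatio τ θ ∧ ∀ ρ ∈ ({θ, 1 - θ} : Set (ℝ → ℝ)),
      IsUnbalanced R (μ.withDensity fun x => ENNReal.ofReal (ρ x)) T := by
  by_cases hnull : μ T = 0 ∨ μ Tᶜ = 0
  · refine ⟨1 / 2, one_half_pos, fun _ => 1 / 2,
      ⟨contDiff_const, fun _ => by norm_num, rfl⟩, fun ρ hρ => ?_⟩
    have hρ_half (x : ℝ) : ρ x = 1 / 2 := by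
      rcases hρ with rfl | rfl
      · rfl
      · norm_num
    simp only [hρ_half, withDensity_const]
    exact (isUnbalanced_of_measure_eq_zero hnull).of_smul_le_of_le_smul (K := 1)
      (by simp) ENNReal.ofReal_ne_top le_rfl (by rw [mul_one])
  · obtain ⟨τ, hτ, θ, hθ, hθT, hθTc⟩ := exists_isSplitRatio_mul_setLIntegral_lt hT
      (not_or.1 hnull).1 (not_or.1 hnull).2 hR
    refine ⟨τ, hτ, θ, hθ, fun ρ hρ => ?_⟩
    simp only [IsUnbalanced, withDensity_apply _ hT, withDensity_apply _ hT.compl]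
    rcases hρ with rfl | rfl
    · exact .inr hθT
    · exact .inl hθTc

end Unbalanced

section PartitionElements

lemma prod_volume_region_between_co {X : Type*} [MeasurableSpace X] {μ : Measure X} [SFinite μ]
    {u w : X → ℝ} {s : Set X} (hu : AEMeasurable u μ) (hw : AEMeasurable w μ)
    (hs : MeasurableSet s) :
    μ.prod volume {p : X × ℝ | p.1 ∈ s ∧ p.2 ∈ Ico (u p.1) (w p.1)} =
      ∫⁻ x in s, ENNReal.ofReal (w x - u x) ∂μ := by
  set E := {p : X × ℝ | p.1 ∈ s ∧ p.2 ∈ Ico (u p.1) (w p.1)}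
  have hE : NullMeasurableSet E (μ.prod volume) :=
    nullMeasurableSet_region_between_co μ hu hw hs.nullMeasurableSet
  rw [← lintegral_indicator_one₀ hE,
    lintegral_prod (E.indicator 1) (aemeasurable_one.indicator₀ hE), ← lintegral_indicator hs]
  refine lintegral_congr fun x => ?_
  by_cases hx : x ∈ s
  · have hslice (y : ℝ) : E.indicator (1 : X × ℝ → ℝ≥0∞) (x, y) =
        (Ico (u x) (w x)).indicator 1 y := by
      classical simp only [E, indicator_apply, mem_ofPred_eq, hx, true_and, Pi.one_apply]
    simp only [hslice, indicator_of_mem hx, lintegral_indicator_one measurableSet_Ico,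
      Real.volume_Ico]
  · simp [E, hx]

lemma measurableSet_MSq : MeasurableSet MSq := measurableSet_Icc.prod measurableSet_Icc

instance : IsFiniteMeasure muM :=
  isFiniteMeasure_restrict.2 (isCompact_Icc.prod isCompact_Icc).measure_ne_top

lemma muM_inter_prod_unitInterval (E : Set (ℝ × ℝ)) {T : Set ℝ} (hT : MeasurableSet T) :
    muM (E ∩ T ×ˢ unitInterval) = (muM.restrict E).map Prod.fst T := by
  rw [Measure.map_apply measurable_fst hT, Measure.restrict_apply (measurable_fst hT), muM,
    Measure.restrict_apply' measurableSet_MSq, Measure.restrict_apply' measurableSet_MSq]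
  congr 1
  ext p
  simp only [MSq, mem_inter_iff, mem_prod, mem_preimage]
  tauto

variable {C C' β : ℝ} {f fx g gx : ℝ → ℝ → ℝ} {n i : ℕ}

lemma IsFol.map_fst_restrict_Pelt (F : IsFol C β f fx) (hi : i < 2 ^ n) :
    (muM.restrict (Pelt f n i)).map Prod.fst = (volume.restrict unitInterval).withDensity
      fun x => ENNReal.ofReal (f x (((i : ℝ) + 1) / 2 ^ n) - f x ((i : ℝ) / 2 ^ n)) := by
  have hbot : (i : ℝ) / 2 ^ n ∈ unitInterval := by
    exact_mod_cast natCast_div_mem_unitInterval hi.le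
  have htop : ((i : ℝ) + 1) / 2 ^ n ∈ unitInterval := by
    exact_mod_cast natCast_div_mem_unitInterval (Nat.succ_le_of_lt hi)
  have hmeas {y : ℝ} (hy : y ∈ unitInterval) :
      AEMeasurable (fun x => f x y) (volume.restrict unitInterval) :=
    ContinuousOn.aemeasurable (fun x hx => (F.hasDeriv y hy x hx).continuousWithinAt)
      measurableSet_Icc
  ext T hT
  rw [withDensity_apply _ hT, ← prod_volume_region_between_co (hmeas hbot) (hmeas htop) hT,
    ← muM_inter_prod_unitInterval _ hT, muM, Measure.restrict_apply' measurableSet_MSq,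
    Measure.restrict_prod_eq_prod_univ, ← Measure.volume_eq_prod,
    Measure.restrict_apply' (measurableSet_Icc.prod MeasurableSet.univ)]
  congr 1
  ext ⟨x, y⟩
  simp only [Pelt, MSq, mem_inter_iff, mem_ofPred_eq, mem_prod, mem_univ, mem_Ico]
  refine ⟨by tauto, fun ⟨⟨_, hy⟩, hx, _⟩ => ?_⟩
  have hyI : y ∈ unitInterval :=
    ⟨(F.mapsTo x hx _ hbot).1.trans hy.1, hy.2.le.trans (F.mapsTo x hx _ htop).2⟩
  tauto

lemma IsFol.exists_close_forall_isUnbalanced (hCC : C' < C) (hβ₀ : 0 < β) (hβ₁ : β < 1)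
    (G : IsFol C' β g gx) {η : ℝ} (hη : 0 < η) {T : Set ℝ} (hT : MeasurableSet T) {R : ℝ≥0∞}
    (hR : R ≠ ∞) :
    ∃ n f fx, IsFol C β f fx ∧ C1Close η f fx g gx ∧
      ∀ i < 2 ^ n, IsUnbalanced R ((muM.restrict (Pelt f n i)).map Prod.fst) T := by
  obtain ⟨h, hx, c, hc, L, hL, H, h_lip, h_close⟩ :=
    G.exists_increasingBiLipschitz_close hβ₀ hβ₁.le (half_pos hη)
  have : NeZero (volume.restrict unitInterval) := ⟨by simp [Measure.restrict_eq_zero]⟩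
  obtain ⟨τ, hτ, θ, hθ, hθ_unbalanced⟩ := exists_isSplitRatio_forall_isUnbalanced
    (μ := volume.restrict unitInterval) hT (R := ENNReal.ofReal (L / c) * R) (by finiteness)
  have h_zigzag := H.eventually_exists_zigzag_close hCC hβ₀ hβ₁ hc h_lip hτ hθ (half_pos hη)
  obtain ⟨k, f, fx, F, hf_close, hf_width⟩ :=
    ((tendsto_pow_atTop_atTop_of_one_lt one_lt_two).eventually h_zigzag).exists
  refine ⟨k + 1, f, fx, F, add_halves η ▸ hf_close.trans h_close, fun i hi => ?_⟩
  rw [F.map_fst_restrict_Pelt hi]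
  set ρ : ℝ → ℝ := if Even i then θ else 1 - θ
  have hρ : ρ ∈ ({θ, 1 - θ} : Set (ℝ → ℝ)) := by grind
  have hρ_width : ∀ x ∈ unitInterval, f x ((i + 1) / 2 ^ (k + 1)) - f x (i / 2 ^ (k + 1)) ∈
      Icc (ρ x * (c / (2 ^ k : ℕ))) (ρ x * (L / (2 ^ k : ℕ))) := by
    intro x hx
    have hwidth := hf_width x hx i (by lia)
    rw [show 2 * ((2 ^ k : ℕ) : ℝ) = 2 ^ (k + 1) by push_cast; ring] at hwidth
    simpa only [ρ, ite_apply, Pi.sub_apply, Pi.one_apply] using hwidth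
  refine IsUnbalanced.withDensity_of_ae_mem_Icc (ρ := ρ) ?_ (by positivity) (by positivity)
    ((ae_restrict_iff' measurableSet_Icc).2 (.of_forall hρ_width))
  rw [div_div_div_cancel_right₀ (by positivity)]
  exact hθ_unbalanced ρ hρ

end PartitionElements

theorem stmt14_general {C C' β α : ℝ} (hCC : C' < C) (hα : 0 ≤ α) (hαβ : α < β) (hβ : β < 1)
    (F₃ : Fol C' β) {ε : ℝ} (hε : 0 < ε) {m : ℕ} (hm : 1 ≤ m) {T : Set ℝ}
    (hT : MeasurableSet T) :
    ∃ n : ℕ, ∃ Ft : Fol C β, dalpha α Ft.f Ft.fx F₃.f F₃.fx < ε ∧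
      ∀ i < 2 ^ n,
        muM (Pelt Ft.f n i ∩ T ×ˢ unitInterval) / muM (Pelt Ft.f n i) < 1 / (m : ℝ≥0∞) ∨
        1 - 1 / (m : ℝ≥0∞) <
          muM (Pelt Ft.f n i ∩ T ×ˢ unitInterval) / muM (Pelt Ft.f n i) := by
  obtain ⟨η, hη, h_dist⟩ := exists_forall_dalpha_lt C hα hαβ hε
  obtain ⟨n, f, fx, F, h_close, h_unbalanced⟩ :=
    F₃.isFol.exists_close_forall_isUnbalanced hCC (hα.trans_lt hαβ) hβ hη hT
      (ENNReal.natCast_ne_top m)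
  refine ⟨n, ⟨f, fx, F⟩, h_dist f fx F₃.f F₃.fx F (F₃.isFol.mono_const hCC.le) h_close,
    fun i hi => ?_⟩
  have h_univ : (muM.restrict (Pelt f n i)).map Prod.fst univ = muM (Pelt f n i) := by
    rw [Measure.map_apply measurable_fst .univ, preimage_univ, Measure.restrict_apply_univ]
  rw [muM_inter_prod_unitInterval _ hT, ← h_univ]
  exact (h_unbalanced i hi).div_lt_or_lt_div hT (ENNReal.natCast_ne_top m) (mod_cast hm)

/-- Let `C' < C` and let `f₃ ∈ F_(C',β)` be `C²` in the second variable.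
Then for every `ξ > 0`, every `m ≥ 1` and every closed interval `I = [b₁,b₂]` with rational
endpoints and `0 < b₁ ≤ b₂ < 1`, there exist `n ∈ ℕ` and `f̃ ∈ F_(C,β)` such that
`d_α(f̃, f₃) < ξ/3` and `f̃ ∈ A_{n,m,I}` (in particular `f̃ ∈ B_{m,I}`). -/
theorem stmt14 (C C' β α : ℝ) (hC' : 1 < C') (hCC : C' < C)
    (hα : 0 ≤ α) (hαβ : α < β) (hβ : β < 1)
    (F₃ : Fol C' β) (hC2 : ∀ x ∈ unitInterval, ContDiffOn ℝ 2 (F₃.f x) unitInterval)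
    (ξ : ℝ) (hξ : 0 < ξ) (m : ℕ) (hm : 1 ≤ m)
    (b₁ b₂ : ℚ) (hb₁ : 0 < (b₁ : ℝ)) (hb : (b₁ : ℝ) ≤ (b₂ : ℝ)) (hb₂ : (b₂ : ℝ) < 1) :
    ∃ n : ℕ, ∃ Ft : Fol C β,
      dalpha α Ft.f Ft.fx F₃.f F₃.fx < ξ / 3 ∧
      Ft ∈ Aset C β n m (b₁ : ℝ) (b₂ : ℝ) ∧ Ft ∈ Bset C β m (b₁ : ℝ) (b₂ : ℝ) := by
  obtain ⟨n, Ft, hd, hA⟩ := stmt14_general hCC hα hαβ hβ F₃ (div_pos hξ three_pos) hm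
    (measurableSet_Icc (a := (b₁ : ℝ)) (b := b₂))
  exact ⟨n, Ft, hd, hA, mem_iUnion.2 ⟨n, hA⟩⟩

end
end

section
/- Let f ∈ ⋂_{m≥1} ⋂_{I} B_{m,I}, where the second intersection is over all closed intervals I ⊆ [0,1] with rational endpoints. Then for every closed interval I ⊆ [0,1] with rational endpoints, for μ̂-almost every y ∈ [0,1], μ_y(I × [0,1]) ∈ {0,1}, where (μ_y) is the Rokhlin disintegration of Lebesgue measure μ on [0,1]² with respect to π_f and μ̂ = (π_f)_*μ. -/
open MeasureTheory Set Filter Topology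
open scoped ENNReal

noncomputable section

/-!
Each partition element of level `n` is the union of the leaves `L_y` with `y` in a dyadic cell
`J`, so disintegration turns `μ(P ∩ S)` into `∫_J μ_y(S) dμ̂` for every measurable `S`. If `f ∈
A_{n,m,I}`, then on each `J` either `μ_y(Ĩ)` or `μ_y(Ĩᶜ)` has integral at most `μ̂(J) / m`, and
hence so does the product `μ_y(Ĩ) μ_y(Ĩᶜ)`, whichever alternative holds on `J`. Summing over
the cells bounds the total integral of the product by `1 / m`. Letting `m → ∞`, the product
vanishes `μ̂`-almost everywhere, and `t (1 - t) = 0` forces `t ∈ {0, 1}`.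
-/

section MeasureFamilies

variable {α Ω : Type*} {mα : MeasurableSpace α} {mΩ : MeasurableSpace Ω}

lemma lintegral_le_mul_of_finset_partition {ι : Type*} {ρ : Measure α} {s : Finset ι}
    {J : ι → Set α} (hdisj : (s : Set ι).PairwiseDisjoint J) (hJ : ∀ i ∈ s, MeasurableSet (J i))
    (hcover : ∀ᵐ y ∂ρ, y ∈ ⋃ i ∈ s, J i) {φ : α → ℝ≥0∞} {c : ℝ≥0∞}
    (hφ : ∀ i ∈ s, ∫⁻ y in J i, φ y ∂ρ ≤ c * ρ (J i)) :
    ∫⁻ y, φ y ∂ρ ≤ c * ρ univ :=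
  calc ∫⁻ y, φ y ∂ρ
      = ∫⁻ y in ⋃ i ∈ s, J i, φ y ∂ρ := by rw [Measure.restrict_eq_self_of_ae_mem hcover]
    _ = ∑ i ∈ s, ∫⁻ y in J i, φ y ∂ρ := lintegral_biUnion_finset hdisj hJ _
    _ ≤ ∑ i ∈ s, c * ρ (J i) := Finset.sum_le_sum hφ
    _ = c * ρ (⋃ i ∈ s, J i) := by rw [← Finset.mul_sum, measure_biUnion_finset hdisj hJ]
    _ ≤ c * ρ univ := by gcongr; exact subset_univ _

lemma lintegral_mul_le_of_lintegral_le_or {ρ : Measure α} {g h : α → ℝ≥0∞}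
    (hg : ∀ y, g y ≤ 1) (hh : ∀ y, h y ≤ 1) {c : ℝ≥0∞}
    (hc : ∫⁻ y, g y ∂ρ ≤ c ∨ ∫⁻ y, h y ∂ρ ≤ c) :
    ∫⁻ y, g y * h y ∂ρ ≤ c := by
  rcases hc with hc | hc
  · exact (lintegral_mono fun y => mul_le_of_le_one_right' (hh y)).trans hc
  · exact (lintegral_mono fun y => mul_le_of_le_one_left' (hg y)).trans hc

lemma measure_inter_le_or_inter_compl_le {μ : Measure Ω} {P S : Set Ω} (hS : MeasurableSet S)
    (hP : μ P ≠ ∞) {c : ℝ≥0∞} (hc : μ (P ∩ S) / μ P < c ∨ 1 - c < μ (P ∩ S) / μ P) :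
    μ (P ∩ S) ≤ c * μ P ∨ μ (P ∩ Sᶜ) ≤ c * μ P := by
  have hratio : μ (P ∩ S) / μ P * μ P = μ (P ∩ S) :=
    ENNReal.div_mul_cancel' (measure_mono_null inter_subset_left) (fun h => absurd h hP)
  refine hc.imp (fun hlt => ?_) fun hlt => ?_
  · rw [← hratio]
    gcongr
  · have hfin : μ (P ∩ S) ≠ ∞ := measure_ne_top_of_subset inter_subset_left hP
    refine (ENNReal.add_le_add_iff_left hfin).1 ?_
    calc μ (P ∩ S) + μ (P ∩ Sᶜ)
        = 1 * μ P := by rw [← sdiff_eq, measure_inter_add_sdiff _ hS, one_mul]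
      _ ≤ (μ (P ∩ S) / μ P + c) * μ P := by gcongr; exact tsub_le_iff_right.1 hlt.le
      _ = μ (P ∩ S) + c * μ P := by rw [add_mul, hratio]

lemma measure_eq_zero_of_disjoint {μ : Measure Ω} [IsProbabilityMeasure μ] {L P : Set Ω}
    (hL : μ L = 1) (hP : MeasurableSet P) (hLP : Disjoint L P) : μ P = 0 :=
  (prob_compl_eq_one_iff hP).1 <|
    le_antisymm prob_le_one (hL ▸ measure_mono hLP.subset_compl_right)

variable {ρ : Measure α} {κ : α → Measure Ω} [∀ y, IsProbabilityMeasure (κ y)]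

lemma lintegral_measure_inter_eq_setLIntegral {L : α → Set Ω} (hL : ∀ᵐ y ∂ρ, κ y (L y) = 1)
    {P : Set Ω} (hP : MeasurableSet P) {J : Set α} (hJ : MeasurableSet J)
    (hsub : ∀ᵐ y ∂ρ, y ∈ J → L y ⊆ P) (hdisj : ∀ᵐ y ∂ρ, y ∉ J → Disjoint (L y) P) (S : Set Ω) :
    ∫⁻ y, κ y (P ∩ S) ∂ρ = ∫⁻ y in J, κ y S ∂ρ := by
  rw [← lintegral_indicator hJ]
  refine lintegral_congr_ae ?_
  filter_upwards [hL, hsub, hdisj] with y hLy hsuby hdisjy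
  by_cases hy : y ∈ J
  · have hPc : κ y Pᶜ = 0 :=
      measure_eq_zero_of_disjoint hLy hP.compl (disjoint_compl_right_iff_subset.2 (hsuby hy))
    rw [indicator_of_mem hy, inter_comm, measure_inter_conull hPc]
  · rw [indicator_of_notMem hy]
    exact measure_mono_null inter_subset_left (measure_eq_zero_of_disjoint hLy hP (hdisjy hy))

lemma ae_measure_eq_zero_or_one_of_lintegral_mul_compl_eq_zero {S : Set Ω} (hS : MeasurableSet S)
    (hκ : Measurable fun y => κ y S) (hκc : Measurable fun y => κ y Sᶜ)
    (hzero : ∫⁻ y, κ y S * κ y Sᶜ ∂ρ = 0) :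
    ∀ᵐ y ∂ρ, κ y S = 0 ∨ κ y S = 1 := by
  filter_upwards [(lintegral_eq_zero_iff (hκ.mul hκc)).1 hzero] with y hy
  exact (mul_eq_zero.1 hy).imp_right (prob_compl_eq_zero_iff hS).1

end MeasureFamilies

/-- The half-open dyadic interval `[i / 2ⁿ, (i + 1) / 2ⁿ)`, the set of labels `y` of the leaves
that make up the partition element `P_i` of level `n`. -/
def dyadicIco (n i : ℕ) : Set ℝ := Ico ((i : ℝ) / 2 ^ n) (((i : ℝ) + 1) / 2 ^ n)

lemma mem_dyadicIco {n i : ℕ} {y : ℝ} :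
    y ∈ dyadicIco n i ↔ (i : ℝ) ≤ y * 2 ^ n ∧ y * 2 ^ n < i + 1 := by
  rw [dyadicIco, mem_Ico, div_le_iff₀ (by positivity), lt_div_iff₀ (by positivity)]

open scoped Function in
lemma pairwise_disjoint_dyadicIco (n : ℕ) : Pairwise (Disjoint on dyadicIco n) := by
  have hmono : Monotone fun i : ℕ => (i : ℝ) / 2 ^ n := fun i j hij => by
    dsimp only
    gcongr
  intro i j hij
  simpa [dyadicIco, Function.onFun] using hmono.pairwise_disjoint_on_Ico_succ hij

lemma Ico_zero_one_subset_iUnion_dyadicIco (n : ℕ) :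
    Ico (0 : ℝ) 1 ⊆ ⋃ i ∈ Finset.range (2 ^ n), dyadicIco n i := by
  rintro y ⟨hy0, hy1⟩
  have hnonneg : 0 ≤ y * 2 ^ n := by positivity
  have hlt : y * 2 ^ n < 2 ^ n := mul_lt_of_lt_one_left (by positivity) hy1
  refine mem_biUnion (x := ⌊y * 2 ^ n⌋₊) ?_
    (mem_dyadicIco.2 ⟨Nat.floor_le hnonneg, Nat.lt_floor_add_one _⟩)
  rw [Finset.mem_coe, Finset.mem_range, Nat.floor_lt hnonneg]
  exact_mod_cast hlt

lemma dyadic_endpoints_mem_unitInterval {n i : ℕ} (hi : i < 2 ^ n) :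
    (i : ℝ) / 2 ^ n ∈ unitInterval ∧ ((i : ℝ) + 1) / 2 ^ n ∈ unitInterval := by
  have hle : (i : ℝ) + 1 ≤ 2 ^ n := by exact_mod_cast hi
  exact ⟨unitInterval.div_mem (by positivity) (by positivity) (by linarith),
    unitInterval.div_mem (by positivity) (by positivity) hle⟩

instance isProbabilityMeasure_muM : IsProbabilityMeasure muM where
  measure_univ := by
    rw [muM, Measure.restrict_apply_univ, MSq, Measure.volume_eq_prod, Measure.prod_prod]
    simp [unitInterval]

lemma measurableSet_Itilde (b₁ b₂ : ℝ) : MeasurableSet (Itilde b₁ b₂) :=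
  measurableSet_Icc.prod measurableSet_Icc

namespace Fol

variable {C β : ℝ} (F : Fol C β)

include F in
lemma one_le_const : 1 ≤ C := by
  simpa [F.isFol.eq_id] using
    F.isFol.upper 0 unitInterval.zero_mem 0 unitInterval.zero_mem 1 unitInterval.one_mem
      zero_ne_one

variable {x : ℝ}

lemma holderOnWith (hβ : 0 < β) (hx : x ∈ unitInterval) :
    HolderOnWith C.toNNReal β.toNNReal (F.f x) unitInterval := by
  intro y₁ hy₁ y₂ hy₂
  rcases eq_or_ne y₂ y₁ with rfl | hne
  · simp
  have hupper : dist (F.f x y₁) (F.f x y₂) ≤ C * dist y₁ y₂ ^ β :=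
    F.isFol.upper x hx y₂ hy₂ y₁ hy₁ hne
  rw [edist_dist, edist_dist, Real.coe_toNNReal _ hβ.le,
    ENNReal.ofReal_rpow_of_nonneg dist_nonneg hβ.le, ← ENNReal.ofReal,
    ← ENNReal.ofReal_mul (zero_le_one.trans F.one_le_const)]
  exact ENNReal.ofReal_le_ofReal hupper

lemma continuousOn (hβ : 0 < β) (hx : x ∈ unitInterval) : ContinuousOn (F.f x) unitInterval :=
  (F.holderOnWith hβ hx).continuousOn (Real.toNNReal_pos.2 hβ)

lemma injOn (hx : x ∈ unitInterval) : InjOn (F.f x) unitInterval := by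
  intro y₁ hy₁ y₂ hy₂ heq
  by_contra hne
  have hC : 0 < C := zero_lt_one.trans_le F.one_le_const
  have hpos : 0 < C⁻¹ * |y₂ - y₁| ^ (1 / β) :=
    mul_pos (inv_pos.2 hC) (Real.rpow_pos_of_pos (abs_pos.2 (sub_ne_zero.2 (Ne.symm hne))) _)
  have hlower := F.isFol.lower x hx y₁ hy₁ y₂ hy₂ hne
  rw [heq, sub_self, abs_zero] at hlower
  exact hlower.not_gt hpos

lemma strictMonoOn (hβ : 0 < β) (hx : x ∈ unitInterval) : StrictMonoOn (F.f x) unitInterval :=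
  (F.continuousOn hβ hx).strictMonoOn_of_injOn_Icc zero_le_one
    (by rw [F.isFol.eq_bot x hx, F.isFol.eq_top x hx]; exact zero_le_one) (F.injOn hx)

lemma surjOn (hβ : 0 < β) (hx : x ∈ unitInterval) : SurjOn (F.f x) unitInterval unitInterval := by
  have hivt := intermediate_value_Icc (zero_le_one' ℝ) (F.continuousOn hβ hx)
  rwa [F.isFol.eq_bot x hx, F.isFol.eq_top x hx] at hivt

lemma projF_mem_Ico (hβ : 0 < β) {p : ℝ × ℝ} (hp : p ∈ MSq) (hp1 : p.2 ≠ 1) :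
    projF F.f p ∈ Ico (0 : ℝ) 1 := by
  have hpre : ∃ y ∈ unitInterval, F.f p.1 y = p.2 := F.surjOn hβ hp.1 hp.2
  have hmem : projF F.f p ∈ unitInterval := Function.invFunOn_mem hpre
  have heq : F.f p.1 (projF F.f p) = p.2 := Function.invFunOn_eq hpre
  refine ⟨hmem.1, hmem.2.lt_of_ne fun h => hp1 ?_⟩
  rw [← heq, h, F.isFol.eq_top _ hp.1]

/-- The strip `{(x, z) : f(x, a) ≤ z < f(x, b)}` between the leaves `L_a` and `L_b`; the
partition elements `P_i` are the strips over the dyadic intervals. -/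
def strip (a b : ℝ) : Set (ℝ × ℝ) :=
  {p | p.1 ∈ unitInterval ∧ p.2 ∈ Ico (F.f p.1 a) (F.f p.1 b)}

lemma measurable_indicator_leaf {y : ℝ} (hy : y ∈ unitInterval) :
    Measurable (unitInterval.indicator fun x => F.f x y) := by
  have hcont : ContinuousOn (fun x => F.f x y) unitInterval :=
    fun x hx => (F.isFol.hasDeriv y hy x hx).continuousWithinAt
  rw [← piecewise_eq_indicator]
  exact hcont.measurable_piecewise continuousOn_const measurableSet_Icc

variable {a b y : ℝ}

lemma measurableSet_strip (ha : a ∈ unitInterval) (hb : b ∈ unitInterval) :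
    MeasurableSet (F.strip a b) := by
  convert measurableSet_region_between_co (F.measurable_indicator_leaf ha)
    (F.measurable_indicator_leaf hb) (measurableSet_Icc : MeasurableSet unitInterval) using 1
  ext p
  refine and_congr_right fun hp => ?_
  rw [indicator_of_mem hp, indicator_of_mem hp]

lemma mem_strip_iff (hβ : 0 < β) (ha : a ∈ unitInterval) (hb : b ∈ unitInterval)
    (hy : y ∈ unitInterval) (hx : x ∈ unitInterval) : (x, F.f x y) ∈ F.strip a b ↔ y ∈ Ico a b :=
  (and_iff_right hx).trans <|
    and_congr ((F.strictMonoOn hβ hx).le_iff_le ha hy) ((F.strictMonoOn hβ hx).lt_iff_lt hy hb)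

lemma leaf_subset_strip (hβ : 0 < β) (ha : a ∈ unitInterval) (hb : b ∈ unitInterval)
    (hy : y ∈ unitInterval) (hyab : y ∈ Ico a b) : Leaf F y ⊆ F.strip a b := by
  rintro _ ⟨x, hx, rfl⟩
  exact (F.mem_strip_iff hβ ha hb hy hx).2 hyab

lemma disjoint_leaf_strip (hβ : 0 < β) (ha : a ∈ unitInterval) (hb : b ∈ unitInterval)
    (hy : y ∈ unitInterval) (hyab : y ∉ Ico a b) : Disjoint (Leaf F y) (F.strip a b) := by
  rw [Set.disjoint_left]
  rintro _ ⟨x, hx, rfl⟩ hmem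
  exact hyab ((F.mem_strip_iff hβ ha hb hy hx).1 hmem)

end Fol

namespace IsDisint

variable {C β : ℝ} {F : Fol C β} {ν : ℝ → Measure (ℝ × ℝ)} (hν : IsDisint F ν)
include hν

lemma quotM_univ : quotM F univ = 1 := by
  have ⟨_, _, _, hdisint⟩ := hν
  simpa using (hdisint univ MeasurableSet.univ).symm

lemma ae_mem_Ico (hβ : 0 < β) : ∀ᵐ y ∂quotM F, y ∈ Ico (0 : ℝ) 1 := by
  -- The pushforward along a map that is not a.e. measurable is `0`, but `quotM F` has mass `1`.
  have hmeas : AEMeasurable (projF F.f) muM :=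
    .of_map_ne_zero fun h => by simpa [quotM, h] using hν.quotM_univ
  have htop : ∀ᵐ p : ℝ × ℝ, p.2 ≠ 1 :=
    Measure.quasiMeasurePreserving_snd.ae (Measure.ae_ne volume 1)
  refine (ae_map_iff hmeas measurableSet_Ico).2 <|
    (ae_restrict_iff' (measurableSet_Icc.prod measurableSet_Icc)).2 ?_
  filter_upwards [htop] with p hp1 hp
  exact F.projF_mem_Ico hβ hp hp1

lemma muM_strip_inter (hβ : 0 < β) {a b : ℝ} (ha : a ∈ unitInterval) (hb : b ∈ unitInterval)
    {S : Set (ℝ × ℝ)} (hS : MeasurableSet S) :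
    muM (F.strip a b ∩ S) = ∫⁻ y in Ico a b, ν y S ∂quotM F := by
  have ⟨_, _, hleaf, hdisint⟩ := hν
  have hstrip := F.measurableSet_strip ha hb
  have hlabel : ∀ᵐ y ∂quotM F, y ∈ unitInterval :=
    (hν.ae_mem_Ico hβ).mono fun _ hy => Ico_subset_Icc_self hy
  rw [hdisint _ (hstrip.inter hS)]
  exact lintegral_measure_inter_eq_setLIntegral hleaf hstrip measurableSet_Ico
    (hlabel.mono fun _ hy => F.leaf_subset_strip hβ ha hb hy)
    (hlabel.mono fun _ hy => F.disjoint_leaf_strip hβ ha hb hy) S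

lemma muM_strip (hβ : 0 < β) {a b : ℝ} (ha : a ∈ unitInterval) (hb : b ∈ unitInterval) :
    muM (F.strip a b) = quotM F (Ico a b) := by
  have := hν.1
  simpa using hν.muM_strip_inter hβ ha hb MeasurableSet.univ

lemma setLIntegral_mul_compl_le (hβ : 0 < β) {a b : ℝ} (ha : a ∈ unitInterval)
    (hb : b ∈ unitInterval) {S : Set (ℝ × ℝ)} (hS : MeasurableSet S) {c : ℝ≥0∞}
    (hc : muM (F.strip a b ∩ S) / muM (F.strip a b) < c ∨
      1 - c < muM (F.strip a b ∩ S) / muM (F.strip a b)) :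
    ∫⁻ y in Ico a b, ν y S * ν y Sᶜ ∂quotM F ≤ c * quotM F (Ico a b) := by
  have := hν.1
  have halt := measure_inter_le_or_inter_compl_le hS (measure_ne_top muM (F.strip a b)) hc
  rw [hν.muM_strip_inter hβ ha hb hS, hν.muM_strip_inter hβ ha hb hS.compl,
    hν.muM_strip hβ ha hb] at halt
  exact lintegral_mul_le_of_lintegral_le_or (fun _ => prob_le_one) (fun _ => prob_le_one) halt

lemma lintegral_mul_compl_le (hβ : 0 < β) {n m : ℕ} {b₁ b₂ : ℝ} (hA : F ∈ Aset C β n m b₁ b₂) :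
    ∫⁻ y, ν y (Itilde b₁ b₂) * ν y (Itilde b₁ b₂)ᶜ ∂quotM F ≤ (m : ℝ≥0∞)⁻¹ := by
  have hcell : ∀ i ∈ Finset.range (2 ^ n),
      ∫⁻ y in dyadicIco n i, ν y (Itilde b₁ b₂) * ν y (Itilde b₁ b₂)ᶜ ∂quotM F ≤
        1 / (m : ℝ≥0∞) * quotM F (dyadicIco n i) := fun i hi => by
    obtain ⟨hl, hr⟩ := dyadic_endpoints_mem_unitInterval (Finset.mem_range.1 hi)
    exact hν.setLIntegral_mul_compl_le hβ hl hr (measurableSet_Itilde b₁ b₂)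
      (hA i (Finset.mem_range.1 hi))
  have htotal := lintegral_le_mul_of_finset_partition
    ((pairwise_disjoint_dyadicIco n).set_pairwise _) (fun _ _ => measurableSet_Ico)
    ((hν.ae_mem_Ico hβ).mono fun _ hy => Ico_zero_one_subset_iUnion_dyadicIco n hy) hcell
  simpa [hν.quotM_univ] using htotal

end IsDisint

theorem stmt17_general {C β : ℝ} (hβ : 0 < β) {F : Fol C β} {b₁ b₂ : ℝ}
    (hF : ∀ m : ℕ, 1 ≤ m → F ∈ Bset C β m b₁ b₂)
    {ν : ℝ → Measure (ℝ × ℝ)} (hν : IsDisint F ν) :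
    ∀ᵐ y ∂quotM F, ν y (Itilde b₁ b₂) = 0 ∨ ν y (Itilde b₁ b₂) = 1 := by
  have ⟨_, hmeas, _, _⟩ := hν
  have hI := measurableSet_Itilde b₁ b₂
  refine ae_measure_eq_zero_or_one_of_lintegral_mul_compl_eq_zero hI
    (hmeas _ hI) (hmeas _ hI.compl) (le_antisymm ?_ zero_le)
  refine ge_of_tendsto ENNReal.tendsto_inv_nat_nhds_zero ?_
  filter_upwards [eventually_ge_atTop 1] with m hm
  obtain ⟨n, hA⟩ := mem_iUnion.1 (hF m hm)
  exact hν.lintegral_mul_compl_le hβ hA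

/-- If `f ∈ ⋂_{m≥1} ⋂_I B_{m,I}` (intersection over all closed subintervals
of `[0,1]` with rational endpoints), then for every such interval `I`, for `μ̂`-a.e. `y`,
`μ_y(I × [0,1]) ∈ {0,1}`, where `(μ_y)` is a Rokhlin disintegration of Lebesgue measure on
the square w.r.t. `π_f`. -/
theorem stmt17 (C β : ℝ) (hC : 1 < C) (hβ0 : 0 < β) (hβ : β < 1)
    (F : Fol C β)
    (hF : ∀ m : ℕ, 1 ≤ m → ∀ b₁ b₂ : ℚ, 0 ≤ b₁ → b₁ ≤ b₂ → b₂ ≤ 1 →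
      F ∈ Bset C β m (b₁ : ℝ) (b₂ : ℝ))
    (ν : ℝ → Measure (ℝ × ℝ)) (hν : IsDisint F ν)
    (b₁ b₂ : ℚ) (hb₁ : 0 ≤ b₁) (hb : b₁ ≤ b₂) (hb₂ : b₂ ≤ 1) :
    ∀ᵐ y ∂quotM F,
      ν y (Itilde (b₁ : ℝ) (b₂ : ℝ)) = 0 ∨ ν y (Itilde (b₁ : ℝ) (b₂ : ℝ)) = 1 :=
  stmt17_general hβ0 (fun m hm => hF m hm b₁ b₂ hb₁ hb hb₂) hν

end
end
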